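/- arXiv:1304.1887 — 2 statements merged into one kernel-verified Lean document; each statement's English description precedes it below -/
import Mathlib

section
/- Under Assumptions (G) and (MR), for any ε ∈ (0,1) and T ∈ ℕ⁺ there exists N_0 ∈ ℕ⁺ such that for all N ≥ N_0, all x_{0:T}, x̌_{0:T} ∈ 𝒳^{T+1}, and all measurable φ : 𝒳^{T+1} → [−1,1], one has |P_T^N(φ)(x_{0:T}) − P_T^N(φ)(x̌_{0:T})| ≤ ε. -/
open MeasureTheory ProbabilityTheory Filter
open scoped ENNReal Topology

namespace ParticleGibbs

variable {𝒳 : Type*} [MeasurableSpace 𝒳]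

/-- Normalised resampling weights `W_t^n`. -/
noncomputable def weight {N : ℕ} (G : 𝒳 → ℝ) (x : Fin N → 𝒳) (n : Fin N) : ℝ :=
  G (x n) / ∑ j, G (x j)

/-- Unnormalised Feynman–Kac path measure `γ_t` on `𝒳^{t+1}`. -/
noncomputable def fk (m0 : Measure 𝒳) (m : ℕ → Kernel 𝒳 𝒳) (G : ℕ → 𝒳 → ℝ) :
    (t : ℕ) → Measure (Fin (t + 1) → 𝒳)
  | 0 => m0.map fun x => fun _ => x
  | t + 1 =>
      (fk m0 m G t).bind fun z =>
        ENNReal.ofReal (G t (z (Fin.last t))) •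
          ((m (t + 1)) (z (Fin.last t))).map fun x => Fin.snoc z x

/-- The Feynman–Kac normalising constant `Z_T`. -/
noncomputable def fkZ (m0 : Measure 𝒳) (m : ℕ → Kernel 𝒳 𝒳) (G : ℕ → 𝒳 → ℝ) (T : ℕ) : ℝ≥0∞ :=
  fk m0 m G T Set.univ

/-- The normalised Feynman–Kac path measure `Q_T`. -/
noncomputable def fkQ (m0 : Measure 𝒳) (m : ℕ → Kernel 𝒳 𝒳) (G : ℕ → 𝒳 → ℝ) (T : ℕ) :
    Measure (Fin (T + 1) → 𝒳) :=
  (fkZ m0 m G T)⁻¹ • fk m0 m G T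

/-- Multinomial selection distribution on labels, with probabilities `W^n`. -/
noncomputable def select {N : ℕ} (G : 𝒳 → ℝ) (x : Fin N → 𝒳) : Measure (Fin N) :=
  ∑ n : Fin N, ENNReal.ofReal (weight G x n) • Measure.dirac n

/-- Multinomial resampling distribution: the ancestors are i.i.d. draws from `select`. -/
noncomputable def multinomialR {N : ℕ} (G : 𝒳 → ℝ) (x : Fin N → 𝒳) :
    Measure (Fin N → Fin N) :=
  Measure.pi fun _ : Fin N => select G x

/-- The law `θ_T^N` of the interacting particle system (states and ancestor variables). -/
noncomputable def particleLaw (N : ℕ) (m0 : Measure 𝒳) (m : ℕ → Kernel 𝒳 𝒳)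
    (R : ℕ → (Fin N → 𝒳) → Measure (Fin N → Fin N)) :
    (t : ℕ) → Measure ((Fin (t + 1) → Fin N → 𝒳) × (Fin t → Fin N → Fin N))
  | 0 => (Measure.pi fun _ : Fin N => m0).map fun x0 => (fun _ => x0, fun i => i.elim0)
  | t + 1 =>
      (particleLaw N m0 m R t).bind fun p =>
        (R t (p.1 (Fin.last t))).bind fun a =>
          (Measure.pi fun n : Fin N => (m (t + 1)) (p.1 (Fin.last t) (a n))).map fun xnew =>
            (Fin.snoc p.1 xnew, Fin.snoc p.2 a)

/-- Auxiliary backward recursion for ancestral lineages: `ancAux T a n k = B_{T-k}`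
where `B_T = n` and `B_t = a_t (B_{t+1})`. -/
def ancAux {N : ℕ} (T : ℕ) (a : Fin T → Fin N → Fin N) (n : Fin N) : ℕ → Fin N
  | 0 => n
  | k + 1 => if h : T - (k + 1) < T then a ⟨T - (k + 1), h⟩ (ancAux T a n k) else n

/-- The ancestral lineage `B` of the particle with final label `n`. -/
def lineage {N T : ℕ} (a : Fin T → Fin N → Fin N) (n : Fin N) : Fin (T + 1) → Fin N :=
  fun t => ancAux T a n (T - (t : ℕ))

/-- The trajectory `Z_T^n` of the particle with final label `n`. -/
def traj {N T : ℕ} (x : Fin (T + 1) → Fin N → 𝒳) (a : Fin T → Fin N → Fin N) (n : Fin N) :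
    Fin (T + 1) → 𝒳 :=
  fun t => x t (lineage a n t)

/-- The extended target distribution `π_T^N` on particles, ancestors and the selected index. -/
noncomputable def piTN (N : ℕ) (m0 : Measure 𝒳) (m : ℕ → Kernel 𝒳 𝒳) (G : ℕ → 𝒳 → ℝ)
    (R : ℕ → (Fin N → 𝒳) → Measure (Fin N → Fin N)) (T : ℕ) :
    Measure (((Fin (T + 1) → Fin N → 𝒳) × (Fin T → Fin N → Fin N)) × Fin N) :=
  (fkZ m0 m G T)⁻¹ •
    ((particleLaw N m0 m R T).withDensity fun p =>
        ENNReal.ofReal (∏ t : Fin T, (N : ℝ)⁻¹ * ∑ n, G t (p.1 t.castSucc n))).bind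
      fun p =>
        (∑ n : Fin N, ENNReal.ofReal ((N : ℝ)⁻¹ * G T (p.1 (Fin.last T) n)) •
            Measure.dirac n).map fun n => (p, n)

/-- The conditional distribution of the whole ancestor vector given `A^n = m`. -/
noncomputable def condAncestor {N : ℕ} (R : Measure (Fin N → Fin N)) (n m : Fin N) :
    Measure (Fin N → Fin N) :=
  (R {a | a n = m})⁻¹ • R.restrict {a | a n = m}

/-- CPF step 1: the law of the conditional particle system, where at each time `t` the
particle labelled `i t` is frozen at `z t` and the ancestor constraint `A_t^{i(t+1)} = i t`
holds. -/
noncomputable def cpfSystem (N : ℕ) (m0 : Measure 𝒳) (m : ℕ → Kernel 𝒳 𝒳)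
    (R : ℕ → (Fin N → 𝒳) → Measure (Fin N → Fin N)) (z : ℕ → 𝒳) (i : ℕ → Fin N) :
    (t : ℕ) → Measure ((Fin (t + 1) → Fin N → 𝒳) × (Fin t → Fin N → Fin N))
  | 0 => (Measure.pi fun n : Fin N => if n = i 0 then Measure.dirac (z 0) else m0).map
      fun x0 => (fun _ => x0, fun j => j.elim0)
  | t + 1 =>
      (cpfSystem N m0 m R z i t).bind fun p =>
        (condAncestor (R t (p.1 (Fin.last t))) (i (t + 1)) (i t)).bind fun a =>
          (Measure.pi fun n : Fin N =>
              if n = i (t + 1) then Measure.dirac (z (t + 1))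
              else (m (t + 1)) (p.1 (Fin.last t) (a n))).map fun xnew =>
            (Fin.snoc p.1 xnew, Fin.snoc p.2 a)

def extendPath {T : ℕ} (z : Fin (T + 1) → 𝒳) : ℕ → 𝒳 :=
  fun t => z ⟨min t T, Nat.lt_succ_of_le (Nat.min_le_right t T)⟩

def extendIdx {N T : ℕ} (i : Fin (T + 1) → Fin N) : ℕ → Fin N :=
  fun t => i ⟨min t T, Nat.lt_succ_of_le (Nat.min_le_right t T)⟩

/-- The CPF kernel with a general assignment `i` of the frozen ancestry. -/
noncomputable def cpfKernelAux (N : ℕ) (m0 : Measure 𝒳) (m : ℕ → Kernel 𝒳 𝒳)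
    (G : ℕ → 𝒳 → ℝ) (R : ℕ → (Fin N → 𝒳) → Measure (Fin N → Fin N)) (T : ℕ)
    (z : ℕ → 𝒳) (i : ℕ → Fin N) : Measure (Fin (T + 1) → 𝒳) :=
  (cpfSystem N m0 m R z i T).bind fun p =>
    (select (G T) (p.1 (Fin.last T))).bind fun n => Measure.dirac (traj p.1 p.2 n)

/-- The CPF (conditional particle filter / Particle Gibbs) Markov kernel `P_T^N`. -/
noncomputable def cpfKernel (N : ℕ) (m0 : Measure 𝒳) (m : ℕ → Kernel 𝒳 𝒳)
    (G : ℕ → 𝒳 → ℝ) (R : ℕ → (Fin N → 𝒳) → Measure (Fin N → Fin N)) (T : ℕ)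
    (z : Fin (T + 1) → 𝒳) : Measure (Fin (T + 1) → 𝒳) :=
  if hN : 0 < N then cpfKernelAux N m0 m G R T (extendPath z) fun _ => (⟨0, hN⟩ : Fin N)
  else 0

/-- Conditional probability that `A^b = v` given the other components `A^{-b} = a^{-b}`,
relative to a resampling distribution `R`. -/
noncomputable def condPMF {N : ℕ} (R : Measure (Fin N → Fin N)) (b : Fin N)
    (a : Fin N → Fin N) (v : Fin N) : ℝ≥0∞ :=
  R {Function.update a b v} / R {a' | ∀ j, j ≠ b → a' j = a j}

/-- Unnormalised backward-sampling weight of value `v` for `B_t`, given `B_{t+1} = b`. -/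
noncomputable def bsWeight {N T : ℕ} (R : ℕ → (Fin N → 𝒳) → Measure (Fin N → Fin N))
    (dens : ℕ → 𝒳 → 𝒳 → ℝ) (x : Fin (T + 1) → Fin N → 𝒳) (a : Fin T → Fin N → Fin N)
    (t : Fin T) (b v : Fin N) : ℝ≥0∞ :=
  condPMF (R t (x t.castSucc)) b (a t) v *
    ENNReal.ofReal (dens ((t : ℕ) + 1) (x t.castSucc v) (x t.succ b))

/-- One backward-sampling update, redrawing `B_t` given `B_{t+1}`. -/
noncomputable def bsStep {N T : ℕ} (R : ℕ → (Fin N → 𝒳) → Measure (Fin N → Fin N))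
    (dens : ℕ → 𝒳 → 𝒳 → ℝ) (x : Fin (T + 1) → Fin N → 𝒳) (a : Fin T → Fin N → Fin N)
    (t : Fin T) (B : Fin (T + 1) → Fin N) : Measure (Fin (T + 1) → Fin N) :=
  ∑ v : Fin N,
    (bsWeight R dens x a t (B t.succ) v /
        ∑ u : Fin N, bsWeight R dens x a t (B t.succ) u) •
      Measure.dirac (Function.update B t.castSucc v)

/-- The law of the backward-sampled lineage (step CPF-3), started from `B_T = nstar`. -/
noncomputable def bsLaw {N T : ℕ} (R : ℕ → (Fin N → 𝒳) → Measure (Fin N → Fin N))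
    (dens : ℕ → 𝒳 → 𝒳 → ℝ) (x : Fin (T + 1) → Fin N → 𝒳) (a : Fin T → Fin N → Fin N)
    (nstar : Fin N) : Measure (Fin (T + 1) → Fin N) :=
  ((List.finRange T).reverse).foldl (fun μ t => μ.bind (bsStep R dens x a t))
    (Measure.dirac fun _ => nstar)

/-- The CPF-BS kernel with general frozen-ancestry assignment `i`. -/
noncomputable def cpfBSKernelAux (N : ℕ) (m0 : Measure 𝒳) (m : ℕ → Kernel 𝒳 𝒳)
    (G : ℕ → 𝒳 → ℝ) (R : ℕ → (Fin N → 𝒳) → Measure (Fin N → Fin N))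
    (dens : ℕ → 𝒳 → 𝒳 → ℝ) (T : ℕ) (z : ℕ → 𝒳) (i : ℕ → Fin N) :
    Measure (Fin (T + 1) → 𝒳) :=
  (cpfSystem N m0 m R z i T).bind fun p =>
    (select (G T) (p.1 (Fin.last T))).bind fun n =>
      (bsLaw R dens p.1 p.2 n).bind fun B => Measure.dirac fun t => p.1 t (B t)

/-- The CPF-BS (conditional particle filter with backward sampling) kernel `P_T^{N,B}`. -/
noncomputable def cpfBSKernel (N : ℕ) (m0 : Measure 𝒳) (m : ℕ → Kernel 𝒳 𝒳)
    (G : ℕ → 𝒳 → ℝ) (R : ℕ → (Fin N → 𝒳) → Measure (Fin N → Fin N))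
    (dens : ℕ → 𝒳 → 𝒳 → ℝ) (T : ℕ) (z : Fin (T + 1) → 𝒳) :
    Measure (Fin (T + 1) → 𝒳) :=
  if hN : 0 < N then
    cpfBSKernelAux N m0 m G R dens T (extendPath z) fun _ => (⟨0, hN⟩ : Fin N)
  else 0

/-- Partial backward sampling: update at times in `J`, deterministic tracing elsewhere. -/
noncomputable def bsStepJ {N T : ℕ} (J : Finset (Fin T))
    (R : ℕ → (Fin N → 𝒳) → Measure (Fin N → Fin N)) (dens : ℕ → 𝒳 → 𝒳 → ℝ)
    (x : Fin (T + 1) → Fin N → 𝒳) (a : Fin T → Fin N → Fin N) (t : Fin T)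
    (B : Fin (T + 1) → Fin N) : Measure (Fin (T + 1) → Fin N) :=
  if t ∈ J then bsStep R dens x a t B
  else Measure.dirac (Function.update B t.castSucc (a t (B t.succ)))

noncomputable def bsLawJ {N T : ℕ} (J : Finset (Fin T))
    (R : ℕ → (Fin N → 𝒳) → Measure (Fin N → Fin N)) (dens : ℕ → 𝒳 → 𝒳 → ℝ)
    (x : Fin (T + 1) → Fin N → 𝒳) (a : Fin T → Fin N → Fin N) (nstar : Fin N) :
    Measure (Fin (T + 1) → Fin N) :=
  ((List.finRange T).reverse).foldl (fun μ t => μ.bind (bsStepJ J R dens x a t))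
    (Measure.dirac fun _ => nstar)

/-- The CPF kernel regarded as a Markov kernel on the extended space of
trajectories together with their ancestral lineage `(z_T^⋆, b_{0:T-1}^⋆, n^⋆)`. -/
noncomputable def extCPF (N : ℕ) (m0 : Measure 𝒳) (m : ℕ → Kernel 𝒳 𝒳)
    (G : ℕ → 𝒳 → ℝ) (R : ℕ → (Fin N → 𝒳) → Measure (Fin N → Fin N)) (T : ℕ)
    (s : (Fin (T + 1) → 𝒳) × (Fin (T + 1) → Fin N)) :
    Measure ((Fin (T + 1) → 𝒳) × (Fin (T + 1) → Fin N)) :=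
  (cpfSystem N m0 m R (extendPath s.1) (extendIdx s.2) T).bind fun p =>
    (select (G T) (p.1 (Fin.last T))).bind fun n =>
      Measure.dirac (traj p.1 p.2 n, lineage p.2 n)

/-- The CPF-BS(J) kernel (partial backward sampling) on the extended space. -/
noncomputable def extBSJ (N : ℕ) (m0 : Measure 𝒳) (m : ℕ → Kernel 𝒳 𝒳)
    (G : ℕ → 𝒳 → ℝ) (R : ℕ → (Fin N → 𝒳) → Measure (Fin N → Fin N))
    (dens : ℕ → 𝒳 → 𝒳 → ℝ) (T : ℕ) (J : Finset (Fin T))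
    (s : (Fin (T + 1) → 𝒳) × (Fin (T + 1) → Fin N)) :
    Measure ((Fin (T + 1) → 𝒳) × (Fin (T + 1) → Fin N)) :=
  (cpfSystem N m0 m R (extendPath s.1) (extendIdx s.2) T).bind fun p =>
    (select (G T) (p.1 (Fin.last T))).bind fun n =>
      (bsLawJ J R dens p.1 p.2 n).bind fun B =>
        Measure.dirac ((fun t => p.1 t (B t)), B)

/-- The CPF-BS kernel on the extended space. -/
noncomputable def extBS (N : ℕ) (m0 : Measure 𝒳) (m : ℕ → Kernel 𝒳 𝒳)
    (G : ℕ → 𝒳 → ℝ) (R : ℕ → (Fin N → 𝒳) → Measure (Fin N → Fin N))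
    (dens : ℕ → 𝒳 → 𝒳 → ℝ) (T : ℕ)
    (s : (Fin (T + 1) → 𝒳) × (Fin (T + 1) → Fin N)) :
    Measure ((Fin (T + 1) → 𝒳) × (Fin (T + 1) → Fin N)) :=
  extBSJ N m0 m G R dens T Finset.univ s

/-- Uniform distribution on a finite type. -/
noncomputable def uniformFin (α : Type*) [Fintype α] [MeasurableSpace α] : Measure α :=
  (Fintype.card α : ℝ≥0∞)⁻¹ • Measure.count

/-- The stationary law of `(Z_T^⋆, B_{0:T-1}^⋆, N^⋆)`, namely `Q_T ⊗ Uniform`. -/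
noncomputable def extTarget (N : ℕ) (m0 : Measure 𝒳) (m : ℕ → Kernel 𝒳 𝒳)
    (G : ℕ → 𝒳 → ℝ) (T : ℕ) :
    Measure ((Fin (T + 1) → 𝒳) × (Fin (T + 1) → Fin N)) :=
  (fkQ m0 m G T).prod (uniformFin (Fin (T + 1) → Fin N))

/-- `k`-fold iterate of a (measure-valued) Markov kernel. -/
noncomputable def iterateKernel {α : Type*} [MeasurableSpace α] (P : α → Measure α) :
    ℕ → α → Measure α
  | 0, x => Measure.dirac x
  | k + 1, x => (P x).bind (iterateKernel P k)

/-- The law of `(ξ_0, …, ξ_n)` for a Markov chain with initial law `μ` and kernel `P`. -/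
noncomputable def chainLaw {α : Type*} [MeasurableSpace α] (μ : Measure α)
    (P : α → Measure α) : (n : ℕ) → Measure (Fin (n + 1) → α)
  | 0 => μ.map fun z => fun _ => z
  | n + 1 => (chainLaw μ P n).bind fun ξ => (P (ξ (Fin.last n))).map fun z => Fin.snoc ξ z

/-- Forced-move selection probabilities (metropolised Gibbs step on `N^⋆`). -/
noncomputable def fmProb {N : ℕ} (w : Fin N → ℝ) (i0 n : Fin N) : ℝ :=
  if n = i0 then
    1 - ∑ j ∈ Finset.univ.erase i0, w j / (1 - w i0) * min ((1 - w i0) / (1 - w j)) 1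
  else w n / (1 - w i0) * min ((1 - w i0) / (1 - w n)) 1

noncomputable def fmSelect {N : ℕ} (G : 𝒳 → ℝ) (x : Fin N → 𝒳) (i0 : Fin N) :
    Measure (Fin N) :=
  ∑ n : Fin N, ENNReal.ofReal (fmProb (weight G x) i0 n) • Measure.dirac n

/-- The forced-move CPF kernel. -/
noncomputable def fmKernel (N : ℕ) (m0 : Measure 𝒳) (m : ℕ → Kernel 𝒳 𝒳)
    (G : ℕ → 𝒳 → ℝ) (R : ℕ → (Fin N → 𝒳) → Measure (Fin N → Fin N)) (T : ℕ)
    (z : Fin (T + 1) → 𝒳) : Measure (Fin (T + 1) → 𝒳) :=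
  if hN : 0 < N then
    (cpfSystem N m0 m R (extendPath z) (fun _ => (⟨0, hN⟩ : Fin N)) T).bind fun p =>
      (fmSelect (G T) (p.1 (Fin.last T)) ⟨0, hN⟩).bind fun n =>
        Measure.dirac (traj p.1 p.2 n)
  else 0

end ParticleGibbs

namespace ParticleGibbs

variable {𝒳 : Type*} [MeasurableSpace 𝒳]

/-- One step of the coupling of two conditional particle systems.  The state of each
particle is `(Z, Ž, coupled-flag)`; `xf`, `xcf` are the frozen values at the new time. -/
noncomputable def coupleStep (N : ℕ) (m : Kernel 𝒳 𝒳) (G : 𝒳 → ℝ) (xf xcf : 𝒳)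
    (s : Fin N → 𝒳 × 𝒳 × Bool) : Measure (Fin N → 𝒳 × 𝒳 × Bool) :=
  let xiC : ℝ := ∑ j, if (s j).2.2 then G (s j).1 else 0
  let xiCc : ℝ := ∑ j, if (s j).2.2 then 0 else G (s j).1
  let xiCcChk : ℝ := ∑ j, if (s j).2.2 then 0 else G (s j).2.1
  let lam : ℝ := xiC / (xiC + xiCc)
  let lamChk : ℝ := xiC / (xiC + xiCcChk)
  let mu : Measure 𝒳 :=
    ∑ j, (if (s j).2.2 then ENNReal.ofReal (G (s j).1 / xiC) else 0) • m (s j).1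
  let muC : Measure 𝒳 :=
    ∑ j, (if (s j).2.2 then 0 else ENNReal.ofReal (G (s j).1 / xiCc)) • m (s j).1
  let muCChk : Measure 𝒳 :=
    ∑ j, (if (s j).2.2 then 0 else ENNReal.ofReal (G (s j).2.1 / xiCcChk)) • m (s j).2.1
  let nu : Measure 𝒳 :=
    ENNReal.ofReal (|lam - lamChk| / (1 - min lam lamChk)) • mu +
      ENNReal.ofReal ((1 - max lam lamChk) / (1 - min lam lamChk)) • muC
  let nuChk : Measure 𝒳 :=
    ENNReal.ofReal (|lam - lamChk| / (1 - min lam lamChk)) • mu +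
      ENNReal.ofReal ((1 - max lam lamChk) / (1 - min lam lamChk)) • muCChk
  let kap : Measure (𝒳 × 𝒳) := if lam ≤ lamChk then muC.prod nuChk else nu.prod muCChk
  let pair : Measure (𝒳 × 𝒳 × Bool) :=
    ENNReal.ofReal (min lam lamChk) • mu.map (fun y => (y, y, true)) +
      (1 - ENNReal.ofReal (min lam lamChk)) • kap.map (fun q => (q.1, q.2, false))
  Measure.pi fun n : Fin N => if (n : ℕ) = 0 then Measure.dirac (xf, xcf, false) else pair

/-- The law of the coupled pair of conditional particle systems with frozen trajectories
`x` and `xc` (each relabelled as particle `0` of its system). -/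
noncomputable def coupledLaw (N : ℕ) (m0 : Measure 𝒳) (m : ℕ → Kernel 𝒳 𝒳)
    (G : ℕ → 𝒳 → ℝ) (x xc : ℕ → 𝒳) :
    (t : ℕ) → Measure (Fin (t + 1) → Fin N → 𝒳 × 𝒳 × Bool)
  | 0 => (Measure.pi fun n : Fin N =>
        if (n : ℕ) = 0 then Measure.dirac (x 0, xc 0, false)
        else m0.map fun y => (y, y, true)).map fun s0 => fun _ => s0
  | t + 1 => (coupledLaw N m0 m G x xc t).bind fun s =>
      (coupleStep N (m (t + 1)) (G t) (x (t + 1)) (xc (t + 1)) (s (Fin.last t))).map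
        fun snew => Fin.snoc s snew

/-- Number of coupled particles at time `t` of a coupled-system realisation. -/
def coupledCard {N t : ℕ} (ω : Fin (t + 1) → Fin N → 𝒳 × 𝒳 × Bool) (r : Fin (t + 1)) : ℕ :=
  (Finset.univ.filter fun n : Fin N => (ω r n).2.2 = true).card

/-! ### Residual and systematic resampling -/

/-- Integer part `⌊N W^n⌋` of the scaled weights. -/
noncomputable def floorCount (N : ℕ) (W : Fin N → ℝ) (n : Fin N) : ℕ := ⌊(N : ℝ) * W n⌋₊

/-- Residue `r^n = N W^n - ⌊N W^n⌋`. -/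
noncomputable def residue (N : ℕ) (W : Fin N → ℝ) (n : Fin N) : ℝ :=
  (N : ℝ) * W n - floorCount N W n

/-- Number of offspring of label `n` in the ancestor vector `a`. -/
def countLabel {N : ℕ} (a : Fin N → Fin N) (n : Fin N) : ℕ :=
  (Finset.univ.filter fun j => a j = n).card

/-- Number of offspring of label `n` in `a` excluding slot `b`. -/
def countLabelExcept {N : ℕ} (b : Fin N) (a : Fin N → Fin N) (n : Fin N) : ℕ :=
  ((Finset.univ.erase b).filter fun j => a j = n).card

/-- Label occupying slot `j` when stacking `c n` copies of each label `n`, sequentially. -/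
noncomputable def stackLabel (N : ℕ) (hN : 0 < N) (c : Fin N → ℕ) (j : ℕ) : Fin N :=
  if h : (Finset.univ.filter fun n : Fin N => j < ∑ i ∈ Finset.Iic n, c i).Nonempty
  then (Finset.univ.filter fun n : Fin N => j < ∑ i ∈ Finset.Iic n, c i).min' h
  else ⟨0, hN⟩

/-- Residual resampling before the random permutation: the first `∑ ⌊N W^n⌋` slots are
deterministic copies, the remaining slots are i.i.d. draws from the residual multinomial. -/
noncomputable def residualBase (N : ℕ) (W : Fin N → ℝ) : Measure (Fin N → Fin N) :=
  if hN : 0 < N then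
    Measure.pi fun j : Fin N =>
      if (j : ℕ) < ∑ n, floorCount N W n then
        Measure.dirac (stackLabel N hN (floorCount N W) (j : ℕ))
      else ∑ n : Fin N,
        ENNReal.ofReal (residue N W n / ∑ i, residue N W i) • Measure.dirac n
  else 0

/-- Residual resampling followed by a uniformly random permutation of the slots. -/
noncomputable def residualLaw (N : ℕ) (W : Fin N → ℝ) : Measure (Fin N → Fin N) :=
  (Fintype.card (Equiv.Perm (Fin N)) : ℝ≥0∞)⁻¹ •
    ∑ σ : Equiv.Perm (Fin N), (residualBase N W).map fun v => v ∘ σ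

/-- The label produced by systematic resampling for cursor position `u + n`:
the unique `m` with `S(m-1) ≤ u + n < S(m)`. -/
noncomputable def sysLabel (N : ℕ) (hN : 0 < N) (W : Fin N → ℝ) (u : ℝ) (n : Fin N) :
    Fin N :=
  if h : (Finset.univ.filter fun m : Fin N =>
      u + (n : ℝ) < (N : ℝ) * ∑ j ∈ Finset.Iic m, W j).Nonempty
  then (Finset.univ.filter fun m : Fin N =>
      u + (n : ℝ) < (N : ℝ) * ∑ j ∈ Finset.Iic m, W j).min' h
  else ⟨0, hN⟩

/-- Systematic resampling with cycle randomisation: `U ~ Uniform[0,1)`, a uniformly random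
`N`-cycle `c(n) = n + k`, and `A^n = Ā^{c(n)} = sysLabel U (n + k)`. -/
noncomputable def systematicLaw (N : ℕ) (W : Fin N → ℝ) : Measure (Fin N → Fin N) :=
  if hN : 0 < N then
    (N : ℝ≥0∞)⁻¹ • ∑ k : Fin N,
      ((volume : Measure ℝ).restrict (Set.Ico (0 : ℝ) 1)).map
        fun u => fun n : Fin N => sysLabel N hN W u (n + k)
  else 0

end ParticleGibbs


namespace ParticleGibbs

variable {𝒳 : Type*} [MetricSpace 𝒳] [CompleteSpace 𝒳] [TopologicalSpace.SeparableSpace 𝒳]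
  [MeasurableSpace 𝒳] [BorelSpace 𝒳]

/-!
The kernels `P_T^N(x, ·)` satisfy a minorisation `α_N • π_T ≤ P_T^N(x, ·)`, uniform in `x`, with
`α_N → 1` as `N → ∞`; two probability measures above `α_N • π_T` give integrals of `φ` with
`|φ| ≤ 1` that differ by at most `2 (1 - α_N)`.

The minorisation comes from a backward induction over time. Given the past, the free particles of
a generation are i.i.d., so the conditional mean of a ratio of empirical sums `∑ h / ∑ v` is bounded
below, by convexity of `D ↦ 1 / D`, by the ratio of the means of `h` and `v`, up to a factor
tending to `1`. The frozen particle only adds a bounded term to the denominator, which is why the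
bound does not depend on `x`. The ratio of the means is in turn a ratio of empirical sums over the
previous generation, with `h` and `v` replaced by their images under the Feynman–Kac operator.
-/

open scoped NNReal

section ReverseJensen

variable {Ω : Type*} [MeasurableSpace Ω] {μ : Measure Ω}

-- The tangent line to `D ↦ 1 / D` at `a`, with the negative term moved to the other side.
lemma two_mul_inv_le_inv_add (D : ℝ≥0∞) {a : ℝ≥0∞} (ha₀ : a ≠ 0) (ha : a ≠ ⊤) :
    2 * a⁻¹ ≤ D⁻¹ + D * a⁻¹ * a⁻¹ := by
  rcases eq_or_ne D 0 with rfl | hD₀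
  · simp
  rcases eq_or_ne D ⊤ with rfl | hD
  · simp [ENNReal.top_mul, ha]
  lift a to ℝ≥0 using ha
  lift D to ℝ≥0 using hD
  norm_cast at ha₀ hD₀
  rw [← ENNReal.coe_inv ha₀, ← ENNReal.coe_inv hD₀]
  norm_cast
  rw [← NNReal.coe_le_coe]
  push_cast
  have hD : (D : ℝ) ≠ 0 := by exact_mod_cast hD₀
  have hsq : (D : ℝ)⁻¹ + D * (a : ℝ)⁻¹ * (a : ℝ)⁻¹ - 2 * (a : ℝ)⁻¹
      = (D : ℝ)⁻¹ * (1 - D * (a : ℝ)⁻¹) ^ 2 := by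
    field_simp
    ring
  have : 0 ≤ (D : ℝ)⁻¹ * (1 - D * (a : ℝ)⁻¹) ^ 2 := by positivity
  linarith

lemma lintegral_div_le_lintegral_div {H D : Ω → ℝ≥0∞} (hH : Measurable H) (hD : Measurable D)
    (hfin : ∫⁻ ω, H ω ∂μ ≠ ⊤) {a : ℝ≥0∞} (ha₀ : a ≠ 0) (ha : a ≠ ⊤)
    (hHD : ∫⁻ ω, H ω * D ω ∂μ ≤ (∫⁻ ω, H ω ∂μ) * a) :
    (∫⁻ ω, H ω ∂μ) / a ≤ ∫⁻ ω, H ω / D ω ∂μ := by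
  have htwice : 2 * ((∫⁻ ω, H ω ∂μ) / a) ≤ ∫⁻ ω, H ω / D ω ∂μ + (∫⁻ ω, H ω ∂μ) / a :=
    calc 2 * ((∫⁻ ω, H ω ∂μ) / a) = ∫⁻ ω, H ω * (2 * a⁻¹) ∂μ := by
          rw [lintegral_mul_const _ hH, div_eq_mul_inv]; ring
      _ ≤ ∫⁻ ω, (H ω / D ω + H ω * D ω * (a⁻¹ * a⁻¹)) ∂μ := by
          refine lintegral_mono fun ω => ?_
          calc H ω * (2 * a⁻¹) ≤ H ω * ((D ω)⁻¹ + D ω * a⁻¹ * a⁻¹) := by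
                gcongr; exact two_mul_inv_le_inv_add _ ha₀ ha
            _ = _ := by rw [div_eq_mul_inv]; ring
      _ = ∫⁻ ω, H ω / D ω ∂μ + (∫⁻ ω, H ω * D ω ∂μ) * (a⁻¹ * a⁻¹) := by
          rw [lintegral_add_right _ (by fun_prop), lintegral_mul_const _ (by fun_prop)]
      _ ≤ ∫⁻ ω, H ω / D ω ∂μ + (∫⁻ ω, H ω ∂μ) * a * (a⁻¹ * a⁻¹) := by gcongr
      _ = ∫⁻ ω, H ω / D ω ∂μ + (∫⁻ ω, H ω ∂μ) / a := by
          rw [mul_assoc, ← mul_assoc a, ENNReal.mul_inv_cancel ha₀ ha, one_mul, div_eq_mul_inv]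
  rw [two_mul] at htwice
  exact (ENNReal.add_le_add_iff_right (ENNReal.div_ne_top hfin ha₀)).1 htwice

end ReverseJensen

section FrozenProduct

variable {ι β : Type*} [Fintype ι] [DecidableEq ι] [MeasurableSpace β]

/-- Joint law of a family of particles in which particle `o` is frozen at `e` and the others are
independent draws from `ρ`. -/
noncomputable def frozenPi (o : ι) (e : β) (ρ : Measure β) : Measure (ι → β) :=
  Measure.pi fun i => if i = o then Measure.dirac e else ρ

instance isProbabilityMeasure_ite (c : Prop) [Decidable c] (μ ν : Measure β)
    [IsProbabilityMeasure μ] [IsProbabilityMeasure ν] :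
    IsProbabilityMeasure (if c then μ else ν) := by
  split_ifs <;> infer_instance

variable {o : ι} {e : β} {ρ : Measure β} [IsProbabilityMeasure ρ]

instance : IsProbabilityMeasure (frozenPi o e ρ) :=
  inferInstanceAs (IsProbabilityMeasure (Measure.pi _))

lemma lintegral_frozenPi_eval {i : ι} (hi : i ≠ o) {f : β → ℝ≥0∞} (hf : Measurable f) :
    ∫⁻ ω, f (ω i) ∂frozenPi o e ρ = ∫⁻ x, f x ∂ρ := by
  have h := (measurePreserving_eval (fun j => if j = o then Measure.dirac e else ρ) i
    ).lintegral_comp hf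
  rwa [if_neg hi] at h

lemma lintegral_frozenPi_eval_mul {i j : ι} (hi : i ≠ o) (hj : j ≠ o) (hij : i ≠ j)
    {f v : β → ℝ≥0∞} (hf : Measurable f) (hv : Measurable v) :
    ∫⁻ ω, f (ω i) * v (ω j) ∂frozenPi o e ρ = (∫⁻ x, f x ∂ρ) * ∫⁻ x, v x ∂ρ := by
  have hindep : iIndepFun (fun (k : ι) (ω : ι → β) => ω k) (frozenPi o e ρ) :=
    iIndepFun_pi (X := fun _ x => x) fun _ => aemeasurable_id
  have h := lintegral_mul_eq_lintegral_mul_lintegral_of_indepFun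
    (hf.comp (measurable_pi_apply i)) (hv.comp (measurable_pi_apply j))
    ((hindep.indepFun hij).comp hf hv)
  rw [← lintegral_frozenPi_eval hi hf, ← lintegral_frozenPi_eval hj hv]
  exact h

-- The diagonal term `j = i` and the frozen term `j = o` each cost at most `C` in place of `∫ v`.
lemma lintegral_frozenPi_mul_sum_le {i : ι} (hi : i ≠ o) {f v : β → ℝ≥0∞}
    (hf : Measurable f) (hv : Measurable v) {C : ℝ≥0∞} (hvC : ∀ x, v x ≤ C) :
    ∫⁻ ω, f (ω i) * ∑ j, v (ω j) ∂frozenPi o e ρ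
      ≤ (∫⁻ x, f x ∂ρ) * (Fintype.card ι * ∫⁻ x, v x ∂ρ + 2 * C) := by
  have hbound : ∀ j, ∫⁻ ω, f (ω i) * v (ω j) ∂frozenPi o e ρ ≤ (∫⁻ x, f x ∂ρ) *
      (∫⁻ x, v x ∂ρ + ((if j = i then C else 0) + if j = o then C else 0)) := by
    intro j
    have hcrude : ∫⁻ ω, f (ω i) * v (ω j) ∂frozenPi o e ρ ≤ (∫⁻ x, f x ∂ρ) * C := by
      rw [← lintegral_frozenPi_eval hi hf (e := e), ← lintegral_mul_const _ (by fun_prop)]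
      gcongr
      exact hvC _
    by_cases hj : j = i ∨ j = o
    · refine hcrude.trans ?_
      gcongr
      refine le_add_left ?_
      rcases hj with rfl | rfl <;> simp
    · rw [not_or] at hj
      rw [lintegral_frozenPi_eval_mul hi hj.2 (Ne.symm hj.1) hf hv]
      gcongr
      exact le_self_add
  simp_rw [Finset.mul_sum]
  rw [lintegral_finsetSum _ (by fun_prop)]
  refine (Finset.sum_le_sum fun j _ => hbound j).trans_eq ?_
  simp [← Finset.mul_sum, Finset.sum_add_distrib, two_mul]

lemma div_le_lintegral_frozenPi_div_sum {i : ι} (hi : i ≠ o) {f v : β → ℝ≥0∞}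
    (hf : Measurable f) (hv : Measurable v) {C : ℝ≥0} (hC : C ≠ 0) (hvC : ∀ x, v x ≤ C) :
    (∫⁻ x, f x ∂ρ) / (Fintype.card ι * ∫⁻ x, v x ∂ρ + 2 * C)
      ≤ ∫⁻ ω, f (ω i) / ∑ j, v (ω j) ∂frozenPi o e ρ := by
  have hvfin : ∫⁻ x, v x ∂ρ ≤ C := by simpa using lintegral_mono (μ := ρ) hvC
  rcases eq_or_ne (∫⁻ x, f x ∂ρ) ⊤ with htop | hfin
  · have hsum : ∀ ω : ι → β, f (ω i) / (Fintype.card ι * C : ℝ≥0∞) ≤ f (ω i) / ∑ j, v (ω j) := by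
      intro ω
      gcongr
      calc ∑ j, v (ω j) ≤ ∑ _j : ι, (C : ℝ≥0∞) := Finset.sum_le_sum fun j _ => hvC (ω j)
        _ = Fintype.card ι * C := by simp
    have hinv : ((Fintype.card ι : ℝ≥0∞) * C)⁻¹ ≠ 0 :=
      ENNReal.inv_ne_zero.2 (ENNReal.mul_ne_top (by simp) (by simp))
    refine le_top.trans ((lintegral_mono hsum).trans' ?_)
    simp only [div_eq_mul_inv]
    rw [lintegral_mul_const _ (by fun_prop), lintegral_frozenPi_eval hi hf, htop,
      ENNReal.top_mul hinv]
  · rw [← lintegral_frozenPi_eval hi hf (e := e)] at hfin ⊢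
    refine lintegral_div_le_lintegral_div (by fun_prop) (by fun_prop) hfin (by simp [hC])
      (ENNReal.add_ne_top.2 ⟨ENNReal.mul_ne_top (by simp) (hvfin.trans_lt (by simp)).ne,
        by finiteness⟩) ?_
    rw [lintegral_frozenPi_eval hi hf]
    exact lintegral_frozenPi_mul_sum_le hi hf hv hvC

/-- Factor lost when the mean of a ratio of empirical means over `N` particles, one of them frozen,
is replaced by the ratio of the means; `C` bounds the integrand of the denominator above and `C⁻¹`
bounds its mean below. The subtraction accounts for the frozen particle. -/
noncomputable def minorConst (C : ℝ≥0) (N : ℕ) : ℝ≥0 :=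
  (N - 1 : ℕ) / (N + 2 * C ^ 2)

lemma tendsto_minorConst (C : ℝ≥0) : Tendsto (minorConst C) atTop (𝓝 1) := by
  rw [← NNReal.tendsto_coe, ← tendsto_add_atTop_iff_nat 1]
  refine (tendsto_natCast_div_add_atTop (1 + 2 * (C : ℝ) ^ 2)).congr fun N => ?_
  simp [minorConst, add_assoc]

lemma minorConst_mul_div_le_lintegral_frozenPi {f v : β → ℝ≥0∞} (hf : Measurable f)
    (hv : Measurable v) {C : ℝ≥0} (hvC : ∀ x, v x ≤ C) (hCv : (C : ℝ≥0∞)⁻¹ ≤ ∫⁻ x, v x ∂ρ) :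
    minorConst C (Fintype.card ι) * ((∫⁻ x, f x ∂ρ) / ∫⁻ x, v x ∂ρ)
      ≤ ∫⁻ ω, (∑ i, f (ω i)) / ∑ i, v (ω i) ∂frozenPi o e ρ := by
  set η := ∫⁻ x, f x ∂ρ
  set w := ∫⁻ x, v x ∂ρ
  have hwC : w ≤ C := by simpa using lintegral_mono (μ := ρ) hvC
  have hC : C ≠ 0 := by
    rintro rfl
    simpa using hCv.trans hwC
  have hC' : (C : ℝ≥0∞) ≠ 0 := by simpa
  have hw₀ : w ≠ 0 := (hCv.trans_lt' (by simp)).ne'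
  have hdenom : Fintype.card ι * w + 2 * C ≤ (Fintype.card ι + 2 * (C : ℝ≥0∞) ^ 2) * w :=
    calc Fintype.card ι * w + 2 * (C : ℝ≥0∞)
        = Fintype.card ι * w + 2 * C ^ 2 * (C : ℝ≥0∞)⁻¹ := by
          rw [pow_two, mul_assoc, mul_assoc, ENNReal.mul_inv_cancel hC' (by simp), mul_one]
      _ ≤ Fintype.card ι * w + 2 * C ^ 2 * w := by gcongr
      _ = _ := by ring
  calc (minorConst C (Fintype.card ι) : ℝ≥0∞) * (η / w)
      = (Fintype.card ι - 1 : ℕ) * (η / ((Fintype.card ι + 2 * (C : ℝ≥0∞) ^ 2) * w)) := by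
        rw [minorConst, ENNReal.coe_div (by positivity), div_eq_mul_inv η (_ * w),
          ENNReal.mul_inv (.inr (hwC.trans_lt (by simp)).ne) (.inr hw₀)]
        push_cast
        simp only [div_eq_mul_inv]
        ring
    _ ≤ (Fintype.card ι - 1 : ℕ) * (η / (Fintype.card ι * w + 2 * C)) := by gcongr
    _ = ∑ _i ∈ Finset.univ.erase o, η / (Fintype.card ι * w + 2 * C) := by
        simp [Finset.card_erase_of_mem]
    _ ≤ ∑ i ∈ Finset.univ.erase o, ∫⁻ ω, f (ω i) / ∑ j, v (ω j) ∂frozenPi o e ρ :=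
        Finset.sum_le_sum fun i hi =>
          div_le_lintegral_frozenPi_div_sum (Finset.ne_of_mem_erase hi) hf hv hC hvC
    _ = ∫⁻ ω, ∑ i ∈ Finset.univ.erase o, f (ω i) / ∑ j, v (ω j) ∂frozenPi o e ρ := by
        rw [lintegral_finsetSum _ (by fun_prop)]
    _ ≤ ∫⁻ ω, (∑ i, f (ω i)) / ∑ i, v (ω i) ∂frozenPi o e ρ := by
        refine lintegral_mono fun ω => ?_
        simp only [div_eq_mul_inv, ← Finset.sum_mul]
        gcongr
        exact Finset.erase_subset _ _

end FrozenProduct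

section ProductKernels

variable {α β γ : Type*} [MeasurableSpace α] [MeasurableSpace β] [MeasurableSpace γ]

lemma map_bind {μ : Measure α} {κ : α → Measure β} (hκ : Measurable κ) {f : β → γ}
    (hf : Measurable f) : (μ.bind κ).map f = μ.bind fun a => (κ a).map f := by
  rw [show (μ.bind κ).map f = _ from Measure.map_comp μ ⟨κ, hκ⟩ hf]
  exact congrArg μ.bind (funext fun a => Kernel.map_apply _ hf a)

variable {ι : Type*} [Fintype ι]

lemma measurable_pi {κ : ι → α → Measure β} [∀ i a, IsProbabilityMeasure (κ i a)]
    (hκ : ∀ i, Measurable (κ i)) : Measurable fun a => Measure.pi fun i => κ i a := by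
  refine Measurable.measure_of_isPiSystem_of_isProbabilityMeasure generateFrom_pi.symm
    isPiSystem_pi ?_
  rintro _ ⟨s, hs, rfl⟩
  simp_rw [Measure.pi_pi]
  exact Finset.measurable_prod _ fun i _ =>
    (Measure.measurable_coe (hs i (Set.mem_univ i))).comp (hκ i)

lemma measurable_map_of_uncurry {κ : α → Measure β} [∀ a, IsProbabilityMeasure (κ a)]
    (hκ : Measurable κ) {f : α → β → γ} (hf : Measurable (Function.uncurry f)) :
    Measurable fun a => (κ a).map (f a) := by
  let K : Kernel α β := ⟨κ, hκ⟩
  have : IsMarkovKernel K := ⟨fun a => inferInstanceAs (IsProbabilityMeasure (κ a))⟩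
  convert ((Kernel.id ×ₖ K).map (Function.uncurry f)).measurable using 2 with a
  rw [Kernel.map_apply _ hf, Kernel.prod_apply, Kernel.id_apply, Measure.dirac_prod,
    Measure.map_map hf measurable_prodMk_left]
  rfl

lemma lintegral_pi_prod (μ : ι → Measure α) [∀ i, IsProbabilityMeasure (μ i)]
    {f : ι → α → ℝ≥0∞} (hf : ∀ i, Measurable (f i)) :
    ∫⁻ a, ∏ i, f i (a i) ∂Measure.pi μ = ∏ i, ∫⁻ x, f i x ∂μ i := by
  have hindep : iIndepFun (fun i (a : ι → α) => f i (a i)) (Measure.pi μ) :=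
    iIndepFun_pi fun i => (hf i).aemeasurable
  have h := lintegral_prod_eq_prod_lintegral_of_indepFun Finset.univ
     (fun i (a : ι → α) => f i (a i)) hindep fun i => by fun_prop
  rw [h]
  exact Finset.prod_congr rfl fun i _ => (measurePreserving_eval μ i).lintegral_comp (hf i)

lemma bind_pi_map_prodMk (μ : ι → Measure α) [∀ i, IsProbabilityMeasure (μ i)]
    (κ : ι → Kernel α β) [∀ i, IsMarkovKernel (κ i)] :
    ((Measure.pi μ).bind fun a => (Measure.pi fun i => κ i (a i)).map fun b i => (a i, b i))
      = Measure.pi fun i => μ i ⊗ₘ κ i := by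
  have hmeas : Measurable fun a : ι → α =>
      (Measure.pi fun i => κ i (a i)).map fun b i => (a i, b i) :=
    measurable_map_of_uncurry (f := fun a b i => (a i, b i))
      (measurable_pi (κ := fun i (a : ι → α) => κ i (a i))
        fun i => (κ i).measurable.comp (measurable_pi_apply i)) (by fun_prop)
  refine (Measure.pi_eq fun s hs => ?_).symm
  have hbox : ∀ a : ι → α, ((Measure.pi fun i => κ i (a i)).map fun b i => (a i, b i))
      (Set.univ.pi s) = ∏ i, κ i (a i) (Prod.mk (a i) ⁻¹' s i) := fun a => by
    rw [Measure.map_apply (by fun_prop) (.univ_pi hs), ← Measure.pi_pi]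
    rfl
  simp_rw [Measure.bind_apply (.univ_pi hs) hmeas.aemeasurable, hbox, Measure.compProd_apply (hs _)]
  exact lintegral_pi_prod μ fun i => Kernel.measurable_kernel_prodMk_left (hs i)

variable [DecidableEq ι]

lemma bind_frozenPi_map_prodMk (o : ι) (d : α) (e : β) (ρ : Measure α) [IsProbabilityMeasure ρ]
    (κ : Kernel α β) [IsMarkovKernel κ] :
    ((frozenPi o d ρ).bind fun a =>
        (Measure.pi fun i => if i = o then Measure.dirac e else κ (a i)).map fun b i => (a i, b i))
      = frozenPi o (d, e) (ρ ⊗ₘ κ) := by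
  let K : ι → Kernel α β := fun i => if i = o then Kernel.const α (Measure.dirac e) else κ
  have : ∀ i, IsMarkovKernel (K i) := fun i => by dsimp only [K]; split_ifs <;> infer_instance
  have hK : ∀ i a, K i a = if i = o then Measure.dirac e else κ a := fun i a => by
    dsimp only [K]; split_ifs <;> simp
  simp_rw [frozenPi, ← hK, bind_pi_map_prodMk]
  congr 1
  funext i
  dsimp only [K]
  split_ifs <;> simp [Measure.compProd_const, Measure.dirac_prod_dirac]

lemma condAncestor_pi {N : ℕ} {ρ : Measure (Fin N)} [IsProbabilityMeasure ρ] (o d : Fin N)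
    (hd : ρ {d} ≠ 0) : condAncestor (Measure.pi fun _ => ρ) o d = frozenPi o d ρ := by
  have hset : {a : Fin N → Fin N | a o = d}
      = Set.univ.pi fun n => if n = o then {d} else Set.univ := by
    ext a
    simp
  have hmeas : ∀ n, ρ (if n = o then {d} else Set.univ) = if n = o then ρ {d} else 1 := by
    intro n
    split_ifs <;> simp
  have hrestrict : ∀ n, ρ.restrict (if n = o then {d} else Set.univ)
      = (if n = o then ρ {d} else 1) • if n = o then Measure.dirac d else ρ := by
    intro n
    split_ifs <;> simp [Measure.restrict_singleton]
  refine (Measure.pi_eq fun s _ => ?_).symm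
  rw [condAncestor, hset, Measure.restrict_pi_pi, Measure.smul_apply, Measure.pi_pi, Measure.pi_pi]
  simp_rw [hmeas, hrestrict, Measure.smul_apply, smul_eq_mul, Finset.prod_mul_distrib]
  simp [← mul_assoc, ENNReal.inv_mul_cancel hd (measure_ne_top ρ _)]

end ProductKernels

section Select

variable {E : Type*} {N : ℕ} {G : E → ℝ}

lemma ofReal_weight (hpos : ∀ x, 0 < G x) (x : Fin N → E) (n : Fin N) :
    ENNReal.ofReal (weight G x n) = ENNReal.ofReal (G (x n)) / ∑ j, ENNReal.ofReal (G (x j)) := by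
  rw [weight, ENNReal.ofReal_div_of_pos (Finset.sum_pos (fun j _ => hpos _) ⟨n, Finset.mem_univ n⟩),
    ENNReal.ofReal_sum_of_nonneg fun j _ => (hpos _).le]

lemma sum_ofReal_ne_zero [NeZero N] (hpos : ∀ x, 0 < G x) (x : Fin N → E) :
    ∑ j, ENNReal.ofReal (G (x j)) ≠ 0 := by
  simp [hpos]

lemma lintegral_select (hpos : ∀ x, 0 < G x) (x : Fin N → E) (f : Fin N → ℝ≥0∞) :
    ∫⁻ n, f n ∂select G x
      = (∑ n, ENNReal.ofReal (G (x n)) * f n) / ∑ j, ENNReal.ofReal (G (x j)) := by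
  simp only [select, lintegral_finsetSum_measure, lintegral_smul_measure, lintegral_dirac,
    ofReal_weight hpos, smul_eq_mul, div_eq_mul_inv, Finset.sum_mul, mul_right_comm]

lemma isProbabilityMeasure_select [NeZero N] (hpos : ∀ x, 0 < G x) (x : Fin N → E) :
    IsProbabilityMeasure (select G x) := by
  constructor
  rw [← lintegral_one, lintegral_select hpos]
  simpa only [mul_one] using ENNReal.div_self (sum_ofReal_ne_zero hpos x)
    (ENNReal.sum_ne_top.2 fun _ _ => ENNReal.ofReal_ne_top)

lemma select_singleton_ne_zero (hpos : ∀ x, 0 < G x) (x : Fin N → E) (n : Fin N) :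
    select G x {n} ≠ 0 := by
  rw [← lintegral_indicator_one (measurableSet_singleton n), lintegral_select hpos]
  refine (ENNReal.div_pos ?_ (ENNReal.sum_ne_top.2 fun _ _ => ENNReal.ofReal_ne_top)).ne'
  simp [Set.indicator_apply, hpos]

variable [MeasurableSpace E]

lemma measurable_select (hG : Measurable G) : Measurable (select (N := N) G) := by
  refine Measure.measurable_of_measurable_coe _ fun s _ => ?_
  simp only [select, Measure.finsetSum_apply, Measure.smul_apply, smul_eq_mul, weight]
  fun_prop

/-- Law of a fresh particle together with its ancestor label, given the current generation: the
ancestor is selected by the potential `G` and moved by the kernel `M`. -/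
noncomputable def offspringKernel (N : ℕ) (hG : Measurable G) (M : Kernel E E) :
    Kernel (Fin N → E) (Fin N × E) :=
  (⟨select G, measurable_select hG⟩ : Kernel (Fin N → E) (Fin N)) ⊗ₖ
    M.comap (fun q : (Fin N → E) × Fin N => q.1 q.2)
      (measurable_from_prod_countable_left (by fun_prop))

variable {M : Kernel E E}

lemma isMarkovKernel_offspringKernel [NeZero N] [IsMarkovKernel M] (hG : Measurable G)
    (hpos : ∀ x, 0 < G x) : IsMarkovKernel (offspringKernel N hG M) := by
  have : IsMarkovKernel (⟨select G, measurable_select hG⟩ : Kernel (Fin N → E) (Fin N)) :=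
    ⟨isProbabilityMeasure_select hpos⟩
  unfold offspringKernel
  infer_instance

lemma offspringKernel_apply [NeZero N] [IsSFiniteKernel M] (hG : Measurable G)
    (hpos : ∀ x, 0 < G x) (x : Fin N → E) :
    offspringKernel N hG M x = select G x ⊗ₘ M.comap x (measurable_of_finite x) := by
  have : IsMarkovKernel (⟨select G, measurable_select hG⟩ : Kernel (Fin N → E) (Fin N)) :=
    ⟨isProbabilityMeasure_select hpos⟩
  rw [offspringKernel, Kernel.compProd_apply_eq_compProd_sectR]
  rfl

lemma lintegral_offspringKernel [NeZero N] [IsSFiniteKernel M] (hG : Measurable G)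
    (hpos : ∀ x, 0 < G x) (x : Fin N → E) {f : Fin N × E → ℝ≥0∞} (hf : Measurable f) :
    ∫⁻ c, f c ∂offspringKernel N hG M x = ∫⁻ n, ∫⁻ y, f (n, y) ∂M (x n) ∂select G x := by
  have := isProbabilityMeasure_select hpos x
  rw [offspringKernel_apply hG hpos, Measure.lintegral_compProd hf]
  rfl

end Select

section ParticleHistory

variable {E : Type*} {N t : ℕ}

/-- Positions and ancestor labels of the generations `0, …, t` of a system of `N` particles. -/
abbrev ParticleHistory (E : Type*) (N t : ℕ) : Type _ :=
  (Fin (t + 1) → Fin N → E) × (Fin t → Fin N → Fin N)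

/-- Extension of a particle history by a generation, given as the pairs (ancestor, position). -/
def appendGeneration (p : ParticleHistory E N t) (c : Fin N → Fin N × E) :
    ParticleHistory E N (t + 1) :=
  (Fin.snoc p.1 fun n => (c n).2, Fin.snoc p.2 fun n => (c n).1)

lemma traj_last (x : Fin (t + 1) → Fin N → E) (a : Fin t → Fin N → Fin N) (n : Fin N) :
    traj x a n (Fin.last t) = x (Fin.last t) n := by
  simp [traj, lineage, ancAux]

lemma ancAux_snoc (a : Fin t → Fin N → Fin N) (b : Fin N → Fin N) (n : Fin N) {k : ℕ}
    (hk : k ≤ t) :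
    ancAux (t + 1) (Fin.snoc a b : Fin (t + 1) → Fin N → Fin N) n (k + 1)
      = ancAux t a (b n) k := by
  induction k with
  | zero => simp [ancAux, Fin.snoc]
  | succ k ih =>
    have hidx : t + 1 - (k + 1 + 1) = t - (k + 1) := by omega
    have hlt : t - (k + 1) < t := by omega
    have hlt' : t + 1 - (k + 1 + 1) < t + 1 := by omega
    rw [ancAux, dif_pos hlt', ih (by omega), ancAux, dif_pos hlt]
    simp [Fin.snoc, hlt]

lemma traj_appendGeneration (p : ParticleHistory E N t) (c : Fin N → Fin N × E) (n : Fin N) :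
    traj (appendGeneration p c).1 (appendGeneration p c).2 n
      = (Fin.snoc (traj p.1 p.2 (c n).1) (c n).2 : Fin (t + 2) → E) := by
  funext s
  refine Fin.lastCases ?_ (fun s => ?_) s
  · rw [traj_last]
    simp [appendGeneration]
  · have hidx : t + 1 - (s : ℕ) = (t - s) + 1 := by omega
    simp only [traj, lineage, appendGeneration, Fin.snoc_castSucc, Fin.val_castSucc]
    rw [hidx, ancAux_snoc _ _ _ (by omega)]

variable [MeasurableSpace E]

lemma measurable_snoc {A : Type*} [MeasurableSpace A] :
    Measurable fun q : (Fin t → A) × A => (Fin.snoc q.1 q.2 : Fin (t + 1) → A) := by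
  refine measurable_pi_lambda _ fun s => Fin.lastCases ?_ (fun s => ?_) s
  · simpa using measurable_snd
  · simp only [Fin.snoc_castSucc]
    fun_prop

lemma measurable_snoc_right {A : Type*} [MeasurableSpace A] (y : Fin t → A) :
    Measurable fun x => (Fin.snoc y x : Fin (t + 1) → A) :=
  measurable_snoc.of_uncurry_left (f := fun y x => Fin.snoc y x)

lemma measurable_appendGeneration :
    Measurable (Function.uncurry (appendGeneration (E := E) (N := N) (t := t))) := by
  refine Measurable.prodMk ?_ ?_
  · exact measurable_snoc.comp (f := fun q : ParticleHistory E N t × (Fin N → Fin N × E) =>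
      (q.1.1, fun n => (q.2 n).2)) (by fun_prop)
  · exact measurable_snoc.comp (f := fun q : ParticleHistory E N t × (Fin N → Fin N × E) =>
      (q.1.2, fun n => (q.2 n).1)) (by fun_prop)

lemma measurable_traj (n : Fin N) :
    Measurable fun p : ParticleHistory E N t => traj p.1 p.2 n := by
  refine measurable_from_prod_countable_left fun a => measurable_pi_lambda _ fun s => ?_
  simp only [traj]
  fun_prop

/-- Law of a particle history extended by one generation whose particle `o` is frozen at position
`e` with ancestor `d`, the other particles being drawn from the offspring kernel `κ`. -/
noncomputable def stepLaw (o d : Fin N) (e : E) (κ : Kernel (Fin N → E) (Fin N × E))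
    (p : ParticleHistory E N t) : Measure (ParticleHistory E N (t + 1)) :=
  (frozenPi o (d, e) (κ (p.1 (Fin.last t)))).map (appendGeneration p)

variable {o d : Fin N} {e : E} {κ : Kernel (Fin N → E) (Fin N × E)}

lemma lintegral_stepLaw (p : ParticleHistory E N t) {F : ParticleHistory E N (t + 1) → ℝ≥0∞}
    (hF : Measurable F) :
    ∫⁻ q, F q ∂stepLaw o d e κ p
      = ∫⁻ c, F (appendGeneration p c) ∂frozenPi o (d, e) (κ (p.1 (Fin.last t))) :=
  lintegral_map hF measurable_appendGeneration.of_uncurry_left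

variable [IsMarkovKernel κ]

instance isProbabilityMeasure_stepLaw (p : ParticleHistory E N t) :
    IsProbabilityMeasure (stepLaw o d e κ p) :=
  Measure.isProbabilityMeasure_map (measurable_appendGeneration.of_uncurry_left).aemeasurable

lemma measurable_stepLaw : Measurable (stepLaw (t := t) o d e κ) := by
  refine measurable_map_of_uncurry ?_ measurable_appendGeneration
  refine measurable_pi
    (κ := fun n (p : ParticleHistory E N t) =>
      if n = o then Measure.dirac (d, e) else κ (p.1 (Fin.last t))) fun n => ?_
  split_ifs
  · exact measurable_const
  · exact κ.measurable.comp (by fun_prop)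

end ParticleHistory

section ConditionalSystem

variable {E : Type*} [MeasurableSpace E] {N : ℕ} {m0 : Measure E} {m : ℕ → Kernel E E}

lemma lintegral_cpfSystem_zero (R : ℕ → (Fin N → E) → Measure (Fin N → Fin N)) (z : ℕ → E)
    (i : ℕ → Fin N) {F : ParticleHistory E N 0 → ℝ≥0∞} (hF : Measurable F) :
    ∫⁻ p, F p ∂cpfSystem N m0 m R z i 0
      = ∫⁻ x, F (fun _ => x, fun j => j.elim0) ∂frozenPi (i 0) (z 0) m0 :=
  lintegral_map hF (by fun_prop)

variable [NeZero N] [∀ t, IsMarkovKernel (m t)] {G : ℕ → E → ℝ}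

lemma cpfSystem_succ (hG : ∀ t, Measurable (G t)) (hpos : ∀ t x, 0 < G t x) (z : ℕ → E)
    (i : ℕ → Fin N) (t : ℕ) :
    cpfSystem N m0 m (fun t => multinomialR (G t)) z i (t + 1)
      = (cpfSystem N m0 m (fun t => multinomialR (G t)) z i t).bind
          (stepLaw (i (t + 1)) (i t) (z (t + 1)) (offspringKernel N (hG t) (m (t + 1)))) := by
  rw [cpfSystem]
  congr 1
  funext p
  have := isProbabilityMeasure_select (hpos t) (p.1 (Fin.last t))
  rw [multinomialR, condAncestor_pi _ _ (select_singleton_ne_zero (hpos t) _ _), stepLaw,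
    offspringKernel_apply (hG t) (hpos t), ← bind_frozenPi_map_prodMk,
    map_bind (measurable_of_finite _) measurable_appendGeneration.of_uncurry_left]
  congr 1
  funext a
  exact (Measure.map_map measurable_appendGeneration.of_uncurry_left
    (f := fun (b : Fin N → E) n => (a n, b n)) (by fun_prop)).symm

lemma isProbabilityMeasure_cpfSystem [IsProbabilityMeasure m0] (hG : ∀ t, Measurable (G t))
    (hpos : ∀ t x, 0 < G t x) (z : ℕ → E) (i : ℕ → Fin N) (t : ℕ) :
    IsProbabilityMeasure (cpfSystem N m0 m (fun t => multinomialR (G t)) z i t) := by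
  induction t with
  | zero => exact Measure.isProbabilityMeasure_map (by fun_prop)
  | succ t ih =>
    have := isMarkovKernel_offspringKernel (N := N) (M := m (t + 1)) (hG t) (hpos t)
    rw [cpfSystem_succ hG hpos]
    exact isProbabilityMeasure_bind measurable_stepLaw.aemeasurable (.of_forall inferInstance)

end ConditionalSystem

section FeynmanKac

variable {E : Type*} {t : ℕ}

/-- The potential `G` of the last position of a path. -/
noncomputable def terminalPotential (G : E → ℝ) (y : Fin (t + 1) → E) : ℝ≥0∞ :=
  ENNReal.ofReal (G (y (Fin.last t)))

variable [MeasurableSpace E]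

lemma measurable_terminalPotential {G : E → ℝ} (hG : Measurable G) :
    Measurable (terminalPotential (t := t) G) := by
  unfold terminalPotential
  fun_prop

/-- Feynman–Kac transition operator: a function `h` of the path up to time `t + 1` is averaged over
the last move, by `M`, and weighted by the potential `G` at time `t`. -/
noncomputable def fkStep (M : Kernel E E) (G : E → ℝ) (h : (Fin (t + 2) → E) → ℝ≥0∞)
    (y : Fin (t + 1) → E) : ℝ≥0∞ :=
  terminalPotential G y * ∫⁻ x, h (Fin.snoc y x) ∂M (y (Fin.last t))

lemma measurable_fkStep {M : Kernel E E} [IsSFiniteKernel M] {G : E → ℝ} (hG : Measurable G)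
    {h : (Fin (t + 2) → E) → ℝ≥0∞} (hh : Measurable h) : Measurable (fkStep M G h) :=
  (measurable_terminalPotential hG).mul <|
    (hh.comp measurable_snoc).lintegral_kernel_prod_right'
      (κ := M.comap (fun y : Fin (t + 1) → E => y (Fin.last t)) (by fun_prop))

variable {m0 : Measure E} {m : ℕ → Kernel E E}

/-- The laws of the path up to time `t` given its past: the law of the initial position if `t = 0`,
otherwise the laws obtained from each path up to time `t - 1` by one move of the chain. -/
def condPathLaws (m0 : Measure E) (m : ℕ → Kernel E E) :
    (t : ℕ) → Set (Measure (Fin (t + 1) → E))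
  | 0 => {m0.map fun x _ => x}
  | t + 1 => Set.range fun y : Fin (t + 1) → E =>
      (m (t + 1) (y (Fin.last t))).map fun x => (Fin.snoc y x : Fin (t + 2) → E)

/-- Assumption (G) for a function `v` of the path up to time `t`, with constant `C`. -/
structure IsPathPotential (m0 : Measure E) (m : ℕ → Kernel E E) (t : ℕ)
    (v : (Fin (t + 1) → E) → ℝ≥0∞) (C : ℝ≥0) : Prop where
  measurable : Measurable v
  le : ∀ y, v y ≤ C
  inv_le_lintegral : ∀ μ ∈ condPathLaws m0 m t, (C : ℝ≥0∞)⁻¹ ≤ ∫⁻ y, v y ∂μ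

lemma IsPathPotential.inv_le_lintegral_const {v : (Fin 1 → E) → ℝ≥0∞} {C : ℝ≥0}
    (hv : IsPathPotential m0 m 0 v C) : (C : ℝ≥0∞)⁻¹ ≤ ∫⁻ x, v (fun _ => x) ∂m0 := by
  rw [← lintegral_map hv.measurable (g := fun x (_ : Fin 1) => x) (by fun_prop)]
  exact hv.inv_le_lintegral _ rfl

lemma IsPathPotential.inv_le_lintegral_snoc {v : (Fin (t + 2) → E) → ℝ≥0∞} {C : ℝ≥0}
    (hv : IsPathPotential m0 m (t + 1) v C) (y : Fin (t + 1) → E) :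
    (C : ℝ≥0∞)⁻¹ ≤ ∫⁻ x, v (Fin.snoc y x) ∂m (t + 1) (y (Fin.last t)) := by
  rw [← lintegral_map hv.measurable (measurable_snoc_right y)]
  exact hv.inv_le_lintegral _ ⟨y, rfl⟩

variable [∀ t, IsMarkovKernel (m t)]

lemma lintegral_fk_succ {G : ℕ → E → ℝ} (hG : ∀ t, Measurable (G t))
    {h : (Fin (t + 2) → E) → ℝ≥0∞} (hh : Measurable h) :
    ∫⁻ y, h y ∂fk m0 m G (t + 1) = ∫⁻ y, fkStep (m (t + 1)) (G t) h y ∂fk m0 m G t := by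
  have hmove : Measurable fun y : Fin (t + 1) → E =>
      ((m (t + 1)) (y (Fin.last t))).map fun x => (Fin.snoc y x : Fin (t + 2) → E) :=
    measurable_map_of_uncurry (κ := fun y : Fin (t + 1) → E => m (t + 1) (y (Fin.last t)))
      ((m (t + 1)).measurable.comp (by fun_prop)) measurable_snoc
  have hweighted : Measurable fun y : Fin (t + 1) → E =>
      ENNReal.ofReal (G t (y (Fin.last t))) •
        ((m (t + 1)) (y (Fin.last t))).map fun x => (Fin.snoc y x : Fin (t + 2) → E) :=
    Measure.measurable_of_measurable_coe _ fun s hs =>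
      (measurable_terminalPotential (hG t)).mul ((Measure.measurable_coe hs).comp hmove)
  rw [fk, Measure.lintegral_bind hweighted.aemeasurable hh.aemeasurable]
  refine lintegral_congr fun y => ?_
  rw [lintegral_smul_measure,
    lintegral_map hh (measurable_snoc_right y), smul_eq_mul]
  rfl

lemma IsPathPotential.fkStep {G : E → ℝ} {v : (Fin (t + 2) → E) → ℝ≥0∞} {g C : ℝ≥0}
    (hG : Measurable G) (hGt : IsPathPotential m0 m t (terminalPotential G) g)
    (hv : IsPathPotential m0 m (t + 1) v C) :
    IsPathPotential m0 m t (fkStep (m (t + 1)) G v) (g * C) where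
  measurable := measurable_fkStep hG hv.measurable
  le y := by
    push_cast
    refine mul_le_mul' (hGt.le y) ?_
    simpa using lintegral_mono (μ := m (t + 1) (y (Fin.last t))) fun x => hv.le (Fin.snoc y x)
  inv_le_lintegral μ hμ := by
    calc ((g * C : ℝ≥0) : ℝ≥0∞)⁻¹ ≤ (g : ℝ≥0∞)⁻¹ * (C : ℝ≥0∞)⁻¹ := by
          rw [ENNReal.coe_mul, ENNReal.mul_inv (.inr (by simp)) (.inl (by simp))]
      _ ≤ (∫⁻ y, terminalPotential G y ∂μ) * (C : ℝ≥0∞)⁻¹ := by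
          gcongr
          exact hGt.inv_le_lintegral μ hμ
      _ = ∫⁻ y, terminalPotential G y * (C : ℝ≥0∞)⁻¹ ∂μ :=
          (lintegral_mul_const _ hGt.measurable).symm
      _ ≤ ∫⁻ y, ParticleGibbs.fkStep (m (t + 1)) G v y ∂μ :=
          lintegral_mono fun y => mul_le_mul_right (hv.inv_le_lintegral_snoc y) _

lemma IsPathPotential.lintegral_fk [IsProbabilityMeasure m0] {G : ℕ → E → ℝ} {g : ℕ → ℝ≥0}
    (hG : ∀ t, Measurable (G t))
    (hGg : ∀ t, IsPathPotential m0 m t (terminalPotential (G t)) (g t))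
    {v : (Fin (t + 1) → E) → ℝ≥0∞} {C : ℝ≥0} (hv : IsPathPotential m0 m t v C) :
    ∫⁻ y, v y ∂fk m0 m G t ≠ 0 ∧ ∫⁻ y, v y ∂fk m0 m G t ≠ ⊤ := by
  induction t generalizing C with
  | zero =>
    have : IsProbabilityMeasure (fk m0 m G 0) :=
      Measure.isProbabilityMeasure_map (f := fun x _ => x) (by fun_prop)
    refine ⟨ne_bot_of_le_ne_bot (by simp) (hv.inv_le_lintegral _ rfl), ?_⟩
    have hle : ∫⁻ y, v y ∂fk m0 m G 0 ≤ C := by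
      simpa using lintegral_mono (μ := fk m0 m G 0) hv.le
    exact ne_top_of_le_ne_top (by simp) hle
  | succ t ih =>
    rw [lintegral_fk_succ hG hv.measurable]
    exact ih ((hGg t).fkStep (hG t) hv)

end FeynmanKac

section Minorisation

variable {E : Type*} {N t : ℕ}

/-- Self-normalised estimate of `∫ h / ∫ v` from the trajectories of a particle history. -/
noncomputable def particleRatio (h v : (Fin (t + 1) → E) → ℝ≥0∞) (p : ParticleHistory E N t) :
    ℝ≥0∞ :=
  (∑ n, h (traj p.1 p.2 n)) / ∑ n, v (traj p.1 p.2 n)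

variable [MeasurableSpace E]

lemma measurable_particleRatio {h v : (Fin (t + 1) → E) → ℝ≥0∞} (hh : Measurable h)
    (hv : Measurable v) : Measurable (particleRatio (N := N) h v) :=
  (Finset.measurable_sum _ fun n _ => hh.comp (measurable_traj n)).div
    (Finset.measurable_sum _ fun n _ => hv.comp (measurable_traj n))

lemma measurable_comp_snoc_traj {h : (Fin (t + 2) → E) → ℝ≥0∞} (hh : Measurable h)
    (p : ParticleHistory E N t) :
    Measurable fun c : Fin N × E => h (Fin.snoc (traj p.1 p.2 c.1) c.2) :=
  hh.comp (measurable_snoc.comp (f := fun c : Fin N × E => (traj p.1 p.2 c.1, c.2)) (by fun_prop))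

variable [NeZero N] {m0 : Measure E} {m : ℕ → Kernel E E} [∀ t, IsMarkovKernel (m t)]

lemma lintegral_offspringKernel_snoc {M : Kernel E E} [IsSFiniteKernel M] {G : E → ℝ}
    (hG : Measurable G) (hpos : ∀ x, 0 < G x) {h : (Fin (t + 2) → E) → ℝ≥0∞} (hh : Measurable h)
    (p : ParticleHistory E N t) :
    ∫⁻ c, h (Fin.snoc (traj p.1 p.2 c.1) c.2) ∂offspringKernel N hG M (p.1 (Fin.last t))
      = particleRatio (fkStep M G h) (terminalPotential G) p := by
  rw [lintegral_offspringKernel hG hpos _ (measurable_comp_snoc_traj hh p), lintegral_select hpos]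
  simp only [particleRatio, fkStep, terminalPotential, traj_last]

lemma minorConst_mul_particleRatio_le_lintegral_stepLaw {M : Kernel E E} [IsMarkovKernel M]
    {G : E → ℝ} (hG : Measurable G) (hpos : ∀ x, 0 < G x) {h v : (Fin (t + 2) → E) → ℝ≥0∞}
    (hh : Measurable h) (hv : Measurable v) {C : ℝ≥0} (hvC : ∀ y, v y ≤ C)
    (hCv : ∀ y : Fin (t + 1) → E, (C : ℝ≥0∞)⁻¹ ≤ ∫⁻ x, v (Fin.snoc y x) ∂M (y (Fin.last t)))
    (o d : Fin N) (e : E) (p : ParticleHistory E N t) :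
    minorConst C N * particleRatio (fkStep M G h) (fkStep M G v) p
      ≤ ∫⁻ q, particleRatio h v q ∂stepLaw o d e (offspringKernel N hG M) p := by
  have := isMarkovKernel_offspringKernel (N := N) (M := M) hG hpos
  have := isProbabilityMeasure_select hpos (p.1 (Fin.last t))
  set ρ := offspringKernel N hG M (p.1 (Fin.last t))
  have hratio : particleRatio (fkStep M G h) (fkStep M G v) p
      = (∫⁻ c, h (Fin.snoc (traj p.1 p.2 c.1) c.2) ∂ρ)
        / ∫⁻ c, v (Fin.snoc (traj p.1 p.2 c.1) c.2) ∂ρ := by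
    have hsum : ∑ n, terminalPotential G (traj p.1 p.2 n) ≠ 0 := by
      simp only [terminalPotential, traj_last]
      exact sum_ofReal_ne_zero hpos _
    have hsum' : ∑ n, terminalPotential G (traj p.1 p.2 n) ≠ ⊤ :=
      ENNReal.sum_ne_top.2 fun _ _ => ENNReal.ofReal_ne_top
    rw [lintegral_offspringKernel_snoc hG hpos hh, lintegral_offspringKernel_snoc hG hpos hv]
    simp only [particleRatio, div_eq_mul_inv _ (∑ _, terminalPotential G _)]
    exact (ENNReal.mul_div_mul_right _ _ (ENNReal.inv_ne_zero.2 hsum')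
      (ENNReal.inv_ne_top.2 hsum)).symm
  have hmean : (C : ℝ≥0∞)⁻¹ ≤ ∫⁻ c, v (Fin.snoc (traj p.1 p.2 c.1) c.2) ∂ρ := by
    rw [lintegral_offspringKernel hG hpos _ (measurable_comp_snoc_traj hv p)]
    calc (C : ℝ≥0∞)⁻¹ = ∫⁻ _, (C : ℝ≥0∞)⁻¹ ∂select G (p.1 (Fin.last t)) := by simp
      _ ≤ _ := lintegral_mono fun n => by
        simpa only [traj_last] using hCv (traj p.1 p.2 n)
  rw [lintegral_stepLaw p (measurable_particleRatio hh hv), hratio]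
  simp only [particleRatio, traj_appendGeneration]
  simpa only [Fintype.card_fin] using minorConst_mul_div_le_lintegral_frozenPi
    (o := o) (e := (d, e)) (measurable_comp_snoc_traj hh p) (measurable_comp_snoc_traj hv p)
    (fun c => hvC _) hmean

lemma minorConst_mul_lintegral_particleRatio_le_succ {G : ℕ → E → ℝ}
    (hG : ∀ t, Measurable (G t)) (hpos : ∀ t x, 0 < G t x) (z : ℕ → E) (i : ℕ → Fin N)
    {h v : (Fin (t + 2) → E) → ℝ≥0∞} {C : ℝ≥0} (hh : Measurable h)
    (hv : IsPathPotential m0 m (t + 1) v C) :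
    minorConst C N * ∫⁻ p, particleRatio (fkStep (m (t + 1)) (G t) h)
        (fkStep (m (t + 1)) (G t) v) p ∂cpfSystem N m0 m (fun t => multinomialR (G t)) z i t
      ≤ ∫⁻ p, particleRatio h v p
          ∂cpfSystem N m0 m (fun t => multinomialR (G t)) z i (t + 1) := by
  have := isMarkovKernel_offspringKernel (N := N) (M := m (t + 1)) (hG t) (hpos t)
  rw [cpfSystem_succ hG hpos, Measure.lintegral_bind measurable_stepLaw.aemeasurable
      (measurable_particleRatio hh hv.measurable).aemeasurable,
    ← lintegral_const_mul _ (measurable_particleRatio (measurable_fkStep (hG t) hh)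
      (measurable_fkStep (hG t) hv.measurable))]
  exact lintegral_mono fun p => minorConst_mul_particleRatio_le_lintegral_stepLaw (hG t)
    (hpos t) hh hv.measurable hv.le hv.inv_le_lintegral_snoc _ _ _ p

/-- Accumulation over the times `0, …, t` of the factors `minorConst`, where `g s` is the constant
of the potential at time `s < t` and `C` that of the denominator at time `t`. -/
noncomputable def minorConstProd (g : ℕ → ℝ≥0) (N : ℕ) : ℕ → ℝ≥0 → ℝ≥0
  | 0, C => minorConst C N
  | t + 1, C => minorConst C N * minorConstProd g N t (g t * C)

lemma tendsto_minorConstProd (g : ℕ → ℝ≥0) (t : ℕ) (C : ℝ≥0) :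
    Tendsto (fun N => minorConstProd g N t C) atTop (𝓝 1) := by
  induction t generalizing C with
  | zero => exact tendsto_minorConst C
  | succ t ih => simpa [minorConstProd] using (tendsto_minorConst C).mul (ih (g t * C))

theorem minorConstProd_mul_div_le_lintegral_cpfSystem [IsProbabilityMeasure m0]
    {G : ℕ → E → ℝ} {g : ℕ → ℝ≥0} (hG : ∀ t, Measurable (G t)) (hpos : ∀ t x, 0 < G t x)
    (hGg : ∀ t, IsPathPotential m0 m t (terminalPotential (G t)) (g t)) (z : ℕ → E) (i : ℕ → Fin N)
    {h v : (Fin (t + 1) → E) → ℝ≥0∞} {C : ℝ≥0} (hh : Measurable h)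
    (hv : IsPathPotential m0 m t v C) :
    minorConstProd g N t C * ((∫⁻ y, h y ∂fk m0 m G t) / ∫⁻ y, v y ∂fk m0 m G t)
      ≤ ∫⁻ p, particleRatio h v p ∂cpfSystem N m0 m (fun t => multinomialR (G t)) z i t := by
  induction t generalizing C with
  | zero =>
    have hconst : Measurable fun x (_ : Fin 1) => (x : E) := by fun_prop
    have htraj : ∀ (x : Fin N → E) (a : Fin 0 → Fin N → Fin N) (n : Fin N),
        traj (fun _ : Fin 1 => x) a n = fun _ => x n := fun x a n => by
      funext s
      simp [traj, lineage, ancAux]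
    rw [lintegral_cpfSystem_zero _ _ _ (measurable_particleRatio hh hv.measurable), fk,
      lintegral_map hh hconst, lintegral_map hv.measurable hconst]
    simp only [particleRatio, htraj]
    have hbase := minorConst_mul_div_le_lintegral_frozenPi (ρ := m0) (o := i 0) (e := z 0)
      (f := fun x => h fun _ => x) (v := fun x => v fun _ => x) (hh.comp hconst)
      (hv.measurable.comp hconst) (fun x => hv.le _) hv.inv_le_lintegral_const
    rw [Fintype.card_fin] at hbase
    exact hbase
  | succ t ih =>
    rw [lintegral_fk_succ hG hh, lintegral_fk_succ hG hv.measurable, minorConstProd,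
      ENNReal.coe_mul, mul_assoc]
    refine (mul_le_mul_right ?_ _).trans
      (minorConst_mul_lintegral_particleRatio_le_succ hG hpos z i hh hv)
    exact ih (measurable_fkStep (hG t) hh) ((hGg t).fkStep (hG t) hv)

end Minorisation

section Kernel

variable {E : Type*} [MeasurableSpace E] {N T : ℕ} {m0 : Measure E} {m : ℕ → Kernel E E}
  {G : ℕ → E → ℝ}

/-- The law on paths proportional to the Feynman–Kac measure reweighted by the terminal potential,
that is, the invariant law `π_T` of the conditional particle filter. -/
noncomputable def fkTarget (m0 : Measure E) (m : ℕ → Kernel E E) (G : ℕ → E → ℝ) (T : ℕ) :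
    Measure (Fin (T + 1) → E) :=
  (∫⁻ y, terminalPotential (G T) y ∂fk m0 m G T)⁻¹ •
    (fk m0 m G T).withDensity (terminalPotential (G T))

lemma lintegral_fkTarget (hG : ∀ t, Measurable (G t)) {f : (Fin (T + 1) → E) → ℝ≥0∞}
    (hf : Measurable f) :
    ∫⁻ y, f y ∂fkTarget m0 m G T = (∫⁻ y, terminalPotential (G T) y * f y ∂fk m0 m G T)
      / ∫⁻ y, terminalPotential (G T) y ∂fk m0 m G T := by
  rw [fkTarget, lintegral_smul_measure, lintegral_withDensity_eq_lintegral_mul _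
    (measurable_terminalPotential (hG T)) hf, smul_eq_mul, mul_comm, div_eq_mul_inv]
  rfl

lemma measurable_bind_select_traj [NeZero N] {G : E → ℝ} (hG : Measurable G)
    (hpos : ∀ x, 0 < G x) :
    Measurable fun p : ParticleHistory E N T =>
      (select G (p.1 (Fin.last T))).bind fun n => Measure.dirac (traj p.1 p.2 n) := by
  have := fun p : ParticleHistory E N T => isProbabilityMeasure_select hpos (p.1 (Fin.last T))
  simp_rw [Measure.bind_dirac_eq_map _ (measurable_of_finite _)]
  exact measurable_map_of_uncurry
    (κ := fun p : ParticleHistory E N T => select G (p.1 (Fin.last T)))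
    ((measurable_select hG).comp (by fun_prop))
    (measurable_from_prod_countable_left measurable_traj)

lemma lintegral_cpfKernelAux [NeZero N] (hG : ∀ t, Measurable (G t)) (hpos : ∀ t x, 0 < G t x)
    (R : ℕ → (Fin N → E) → Measure (Fin N → Fin N)) (z : ℕ → E) (i : ℕ → Fin N)
    {f : (Fin (T + 1) → E) → ℝ≥0∞} (hf : Measurable f) :
    ∫⁻ y, f y ∂cpfKernelAux N m0 m G R T z i
      = ∫⁻ p, particleRatio (fun y => terminalPotential (G T) y * f y) (terminalPotential (G T)) p
          ∂cpfSystem N m0 m R z i T := by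
  rw [cpfKernelAux, Measure.lintegral_bind
    (measurable_bind_select_traj (hG T) (hpos T)).aemeasurable hf.aemeasurable]
  refine lintegral_congr fun p => ?_
  rw [Measure.lintegral_bind (measurable_of_finite _).aemeasurable hf.aemeasurable]
  simp only [lintegral_dirac' _ hf, lintegral_select (hpos T), particleRatio, terminalPotential,
    traj_last]

variable [∀ t, IsMarkovKernel (m t)] [IsProbabilityMeasure m0]

lemma isProbabilityMeasure_cpfKernelAux [NeZero N] (hG : ∀ t, Measurable (G t))
    (hpos : ∀ t x, 0 < G t x) (z : ℕ → E) (i : ℕ → Fin N) :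
    IsProbabilityMeasure (cpfKernelAux N m0 m G (fun t => multinomialR (G t)) T z i) := by
  have := isProbabilityMeasure_cpfSystem (m0 := m0) (m := m) hG hpos z i T
  refine isProbabilityMeasure_bind (measurable_bind_select_traj (hG T) (hpos T)).aemeasurable
    (.of_forall fun p => ?_)
  have := isProbabilityMeasure_select (hpos T) (p.1 (Fin.last T))
  exact isProbabilityMeasure_bind (measurable_of_finite _).aemeasurable (.of_forall inferInstance)

variable {g : ℕ → ℝ≥0}

lemma isProbabilityMeasure_fkTarget (hG : ∀ t, Measurable (G t))
    (hGg : ∀ t, IsPathPotential m0 m t (terminalPotential (G t)) (g t)) :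
    IsProbabilityMeasure (fkTarget m0 m G T) := by
  have hZ := (hGg T).lintegral_fk hG hGg
  constructor
  rw [← lintegral_one, lintegral_fkTarget hG measurable_const]
  simpa only [mul_one] using ENNReal.div_self hZ.1 hZ.2

theorem minorConstProd_smul_fkTarget_le_cpfKernelAux [NeZero N] (hG : ∀ t, Measurable (G t))
    (hpos : ∀ t x, 0 < G t x)
    (hGg : ∀ t, IsPathPotential m0 m t (terminalPotential (G t)) (g t)) (z : ℕ → E)
    (i : ℕ → Fin N) :
    minorConstProd g N T (g T) • fkTarget m0 m G T
      ≤ cpfKernelAux N m0 m G (fun t => multinomialR (G t)) T z i := by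
  refine Measure.le_iff.2 fun s hs => ?_
  have hind : Measurable (s.indicator (1 : (Fin (T + 1) → E) → ℝ≥0∞)) :=
    measurable_one.indicator hs
  rw [Measure.smul_apply, ENNReal.smul_def, smul_eq_mul, ← lintegral_indicator_one hs,
    ← lintegral_indicator_one hs, lintegral_fkTarget hG hind,
    lintegral_cpfKernelAux hG hpos _ _ _ hind]
  exact minorConstProd_mul_div_le_lintegral_cpfSystem hG hpos hGg z i
    ((measurable_terminalPotential (hG T)).mul hind) (hGg T)

end Kernel

section TotalVariation

variable {Ω : Type*} [MeasurableSpace Ω] {π : Measure Ω} [IsProbabilityMeasure π] {α : ℝ≥0}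
  {φ : Ω → ℝ}

lemma abs_integral_sub_mul_integral_le {μ : Measure Ω} [IsProbabilityMeasure μ] (hμ : α • π ≤ μ)
    (hφ : Measurable φ) (hφ1 : ∀ ω, |φ ω| ≤ 1) :
    |∫ ω, φ ω ∂μ - α * ∫ ω, φ ω ∂π| ≤ 1 - α := by
  have hint : ∀ ν : Measure Ω, IsFiniteMeasure ν → Integrable φ ν := fun ν _ =>
    .of_bound hφ.aestronglyMeasurable 1 (.of_forall hφ1)
  have hdecomp : μ - α • π + α • π = μ := Measure.sub_add_cancel_of_le hμ
  have hmass : (μ - α • π).real Set.univ = 1 - α := by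
    have h : (μ - α • π + α • π).real Set.univ = 1 := by rw [hdecomp, probReal_univ]
    rw [measureReal_add_apply, measureReal_nnreal_smul_apply, probReal_univ (μ := π), mul_one] at h
    exact eq_sub_of_add_eq h
  have hφint : ∫ ω, φ ω ∂μ = ∫ ω, φ ω ∂(μ - α • π) + α * ∫ ω, φ ω ∂π := by
    conv_lhs => rw [← hdecomp]
    rw [integral_add_measure (hint _ inferInstance) (hint _ inferInstance),
      integral_smul_nnreal_measure, NNReal.smul_def, smul_eq_mul]
  calc |∫ ω, φ ω ∂μ - α * ∫ ω, φ ω ∂π| = ‖∫ ω, φ ω ∂(μ - α • π)‖ := by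
        rw [hφint, add_sub_cancel_right, Real.norm_eq_abs]
    _ ≤ 1 * (μ - α • π).real Set.univ := norm_integral_le_of_norm_le_const (.of_forall hφ1)
    _ = 1 - α := by rw [one_mul, hmass]

lemma abs_integral_sub_integral_le {μ ν : Measure Ω} [IsProbabilityMeasure μ]
    [IsProbabilityMeasure ν] (hμ : α • π ≤ μ) (hν : α • π ≤ ν) (hφ : Measurable φ)
    (hφ1 : ∀ ω, |φ ω| ≤ 1) : |∫ ω, φ ω ∂μ - ∫ ω, φ ω ∂ν| ≤ 2 * (1 - α) :=
  calc |∫ ω, φ ω ∂μ - ∫ ω, φ ω ∂ν|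
      ≤ |∫ ω, φ ω ∂μ - α * ∫ ω, φ ω ∂π| + |α * ∫ ω, φ ω ∂π - ∫ ω, φ ω ∂ν| :=
        abs_sub_le _ _ _
    _ ≤ (1 - α) + (1 - α) :=
        add_le_add (abs_integral_sub_mul_integral_le hμ hφ hφ1)
          ((abs_sub_comm _ _).trans_le (abs_integral_sub_mul_integral_le hν hφ hφ1))
    _ = 2 * (1 - α) := by ring

end TotalVariation

section Assumption

variable {E : Type*} [MeasurableSpace E]

lemma inv_toNNReal_le_lintegral {μ : Measure E} [IsProbabilityMeasure μ] {F : E → ℝ}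
    (hF : Measurable F) (hpos : ∀ x, 0 < F x) {c : ℝ} (hFc : ∀ x, F x ≤ c)
    (hc : c⁻¹ ≤ ∫ x, F x ∂μ) : (c.toNNReal : ℝ≥0∞)⁻¹ ≤ ∫⁻ x, ENNReal.ofReal (F x) ∂μ := by
  obtain ⟨x⟩ := nonempty_of_isProbabilityMeasure μ
  have hc₀ : 0 < c := (hpos x).trans_le (hFc x)
  have hint : Integrable F μ := .of_bound hF.aestronglyMeasurable c
    (.of_forall fun x => by simpa [abs_of_pos (hpos x)] using hFc x)
  calc (c.toNNReal : ℝ≥0∞)⁻¹ = ENNReal.ofReal c⁻¹ := (ENNReal.ofReal_inv_of_pos hc₀).symm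
    _ ≤ ENNReal.ofReal (∫ x, F x ∂μ) := ENNReal.ofReal_le_ofReal hc
    _ = ∫⁻ x, ENNReal.ofReal (F x) ∂μ :=
      ofReal_integral_eq_lintegral_ofReal hint (.of_forall fun x => (hpos x).le)

lemma isPathPotential_terminalPotential {m0 : Measure E} [IsProbabilityMeasure m0]
    {m : ℕ → Kernel E E} [∀ t, IsMarkovKernel (m t)] {G : ℕ → E → ℝ}
    (hG : ∀ t, Measurable (G t)) (hpos : ∀ t x, 0 < G t x) {g : ℕ → ℝ} (hGg : ∀ t x, G t x ≤ g t)
    (hg0 : (g 0)⁻¹ ≤ ∫ x, G 0 x ∂m0)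
    (hgt : ∀ t, 0 < t → ∀ x', (g t)⁻¹ ≤ ∫ x, G t x ∂m t x') (t : ℕ) :
    IsPathPotential m0 m t (terminalPotential (G t)) (g t).toNNReal where
  measurable := measurable_terminalPotential (hG t)
  le y := ENNReal.ofReal_le_ofReal (hGg t _)
  inv_le_lintegral μ hμ := by
    have hmeas := measurable_terminalPotential (t := t) (hG t)
    match t, μ, hμ with
    | 0, _, rfl =>
      rw [lintegral_map hmeas (by fun_prop)]
      exact inv_toNNReal_le_lintegral (hG 0) (hpos 0) (hGg 0) hg0
    | t + 1, _, ⟨y, rfl⟩ =>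
      rw [lintegral_map hmeas (measurable_snoc_right y)]
      simpa [terminalPotential] using inv_toNNReal_le_lintegral (hG (t + 1))
        (hpos (t + 1)) (hGg (t + 1)) (hgt (t + 1) t.succ_pos _)

end Assumption

theorem cpf_kernel_uniform_closeness_general {E : Type*} [MeasurableSpace E] (T : ℕ)
    (m0 : Measure E) [IsProbabilityMeasure m0] (m : ℕ → Kernel E E) [∀ t, IsMarkovKernel (m t)]
    (G : ℕ → E → ℝ) (hGmeas : ∀ t, Measurable (G t)) (hGpos : ∀ t x, 0 < G t x)
    (g : ℕ → ℝ) (hGle : ∀ t x, G t x ≤ g t) (hg0 : (g 0)⁻¹ ≤ ∫ x, G 0 x ∂m0)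
    (hgt : ∀ t, 0 < t → ∀ x', (g t)⁻¹ ≤ ∫ x, G t x ∂((m t) x')) (ε : ℝ) (hε : 0 < ε) :
    ∃ N0 : ℕ, 1 ≤ N0 ∧ ∀ N, N0 ≤ N →
      ∀ (x xc : Fin (T + 1) → E) (φ : (Fin (T + 1) → E) → ℝ),
        Measurable φ → (∀ z, |φ z| ≤ 1) →
        |(∫ z, φ z ∂(cpfKernel N m0 m G (fun t => multinomialR (G t)) T x)) -
            ∫ z, φ z ∂(cpfKernel N m0 m G (fun t => multinomialR (G t)) T xc)| ≤ ε := by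
  have hGg := isPathPotential_terminalPotential hGmeas hGpos hGle hg0 hgt
  have hlim := NNReal.tendsto_coe.2 (tendsto_minorConstProd (fun t => (g t).toNNReal) T
    (g T).toNNReal)
  have hev : ∀ᶠ N in atTop, 1 - ε / 2 <
      (minorConstProd (fun t => (g t).toNNReal) N T (g T).toNNReal : ℝ) :=
    hlim.eventually_const_lt (by simpa using hε)
  obtain ⟨N0, hN0, hclose⟩ := (atTop_basis' 1).eventually_iff.1 hev
  refine ⟨N0, hN0, fun N hN x xc φ hφ hφ1 => ?_⟩
  have hNpos : 0 < N := by omega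
  have : NeZero N := ⟨hNpos.ne'⟩
  have := isProbabilityMeasure_fkTarget (T := T) hGmeas hGg
  have hprob := isProbabilityMeasure_cpfKernelAux (N := N) (m0 := m0) (m := m) (T := T) hGmeas hGpos
  have hminor := minorConstProd_smul_fkTarget_le_cpfKernelAux (N := N) (T := T) hGmeas hGpos hGg
  simp only [cpfKernel, dif_pos hNpos]
  have := hprob (extendPath x) fun _ => ⟨0, hNpos⟩
  have := hprob (extendPath xc) fun _ => ⟨0, hNpos⟩
  refine (abs_integral_sub_integral_le (hminor _ _) (hminor _ _) hφ hφ1).trans ?_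
  linarith [hclose (Set.mem_Ici.2 hN)]

/-- Under Assumptions (G) and (MR): for any `ε ∈ (0,1)` and `T ≥ 1` there exists `N₀`
such that for all `N ≥ N₀`, all starting trajectories and all `φ : 𝒳^{T+1} → [-1,1]`,
`|P_T^N(φ)(x_{0:T}) - P_T^N(φ)(x̌_{0:T})| ≤ ε`. -/
theorem cpf_kernel_uniform_closeness
    (T : ℕ) (hT : 1 ≤ T)
    (m0 : Measure 𝒳) (hm0 : IsProbabilityMeasure m0)
    (m : ℕ → Kernel 𝒳 𝒳) (hm : ∀ t, IsMarkovKernel (m t))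
    (G : ℕ → 𝒳 → ℝ) (hGmeas : ∀ t, Measurable (G t))
    (hGpos : ∀ t x, 0 < G t x)
    (g : ℕ → ℝ) (hg : ∀ t, 0 < g t) (hGle : ∀ t x, G t x ≤ g t)
    (hg0 : (g 0)⁻¹ ≤ ∫ x, G 0 x ∂m0)
    (hgt : ∀ t, 0 < t → ∀ x', (g t)⁻¹ ≤ ∫ x, G t x ∂((m t) x'))
    (ε : ℝ) (hε : ε ∈ Set.Ioo (0 : ℝ) 1) :
    ∃ N0 : ℕ, 1 ≤ N0 ∧ ∀ N, N0 ≤ N →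
      ∀ (x xc : Fin (T + 1) → 𝒳) (φ : (Fin (T + 1) → 𝒳) → ℝ),
        Measurable φ → (∀ z, |φ z| ≤ 1) →
        |(∫ z, φ z ∂(cpfKernel N m0 m G (fun t => multinomialR (G t)) T x)) -
            ∫ z, φ z ∂(cpfKernel N m0 m G (fun t => multinomialR (G t)) T xc)| ≤ ε := by
  exact cpf_kernel_uniform_closeness_general T m0 m G hGmeas hGpos g hGle hg0 hgt ε hε.1

end ParticleGibbs
end

section
/- Under Assumptions (G) and (MR), for any δ ∈ (0,1) and T ∈ ℕ⁺, there exist positive integers N_0, L_1, …, L_T such that for any N ≥ N_0 and any frozen trajectories x_{0:T}, x̌_{0:T} ∈ 𝒳^{T+1}, the coupled conditional particle systems satisfy ∑_{k_1=1}^{L_1} ⋯ ∑_{k_T=1}^{L_T} ℙ(|C_1| = N−k_1, …, |C_T| = N−k_T) ≥ (1−δ)^{3T}, where C_t is the set of coupled particle labels at time t. -/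
open MeasureTheory ProbabilityTheory Filter
open scoped ENNReal Topology

namespace ParticleGibbs

/-!
Suppose that at some time at most `L` particles are uncoupled and the coupled ones carry potential
of order `N`. Then `1 - λ ∧ λ̌ = O(1 / N)` whatever the frozen trajectories are, so the expected
number of uncoupled particles at the next time is `O(1)`, and Markov's inequality bounds it by some
`L'` with probability close to `1`. Assumption (G) bounds the mean potential of a coupled offspring
from below, and by Chebyshev's inequality the coupled particles again carry potential of order `N`
with probability close to `1`. Iterating over time reaches any prescribed probability `p < 1`.
-/

theorem ofReal_one_sub_le_mul_self (δ : ℝ) :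
    ENNReal.ofReal (1 - δ) ≤ ENNReal.ofReal (1 - δ / 2) * ENNReal.ofReal (1 - δ / 2) := by
  rcases le_total δ 2 with hδ | hδ
  · rw [← ENNReal.ofReal_mul (by linarith)]
    exact ENNReal.ofReal_le_ofReal (by nlinarith [sq_nonneg δ])
  · rw [ENNReal.ofReal_of_nonpos (by linarith)]
    exact zero_le

section MeasureValuedMaps

variable {α β γ : Type*} [MeasurableSpace α] [MeasurableSpace β] [MeasurableSpace γ]

theorem mul_measure_le_bind {μ : Measure α} {κ : α → Measure β} (hκ : AEMeasurable κ μ)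
    {A : Set α} {S : Set β} {c : ℝ≥0∞} (hc : ∀ a ∈ A, c ≤ κ a S) :
    c * μ A ≤ μ.bind κ S := by
  let S' := toMeasurable (μ.bind κ) S
  have hS' : MeasurableSet S' := measurableSet_toMeasurable _ _
  calc c * μ A ≤ c * μ {a | c ≤ κ a S'} := by
        gcongr
        exact fun a ha => (hc a ha).trans (measure_mono (subset_toMeasurable _ _))
    _ ≤ ∫⁻ a, κ a S' ∂μ :=
        mul_meas_ge_le_lintegral₀ ((Measure.measurable_coe hS').comp_aemeasurable hκ) c
    _ = μ.bind κ S := by rw [← Measure.bind_apply hS' hκ, measure_toMeasurable]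

instance (μ : Measure α) [IsFiniteMeasure μ] (r : ℝ) :
    IsFiniteMeasure (ENNReal.ofReal r • μ) :=
  μ.smul_finite ENNReal.ofReal_ne_top

theorem measurable_measure_smul {c : α → ℝ≥0∞} {μ : α → Measure β} (hc : Measurable c)
    (hμ : Measurable μ) : Measurable fun a => c a • μ a :=
  Measure.measurable_of_measurable_coe _ fun _ hs =>
    hc.mul ((Measure.measurable_coe hs).comp hμ)

theorem measurable_measure_prod {μ : α → Measure β} {ν : α → Measure γ}
    [∀ a, IsFiniteMeasure (μ a)] [∀ a, IsFiniteMeasure (ν a)]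
    (hμ : Measurable μ) (hν : Measurable ν) : Measurable fun a => (μ a).prod (ν a) := by
  have h_rect {s : Set β} {t : Set γ} (hs : MeasurableSet s) (ht : MeasurableSet t) :
      Measurable fun a => (μ a).prod (ν a) (s ×ˢ t) := by
    simp only [Measure.prod_prod]
    exact ((Measure.measurable_coe hs).comp hμ).mul ((Measure.measurable_coe ht).comp hν)
  refine Measurable.measure_of_isPiSystem generateFrom_prod.symm isPiSystem_prod ?_ ?_
  · rintro _ ⟨s, hs, t, ht, rfl⟩
    exact h_rect hs ht
  · simpa only [Set.univ_prod_univ] using h_rect .univ .univ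

theorem measurable_measure_pi {ι : Type*} [Fintype ι] {X : ι → Type*}
    [∀ i, MeasurableSpace (X i)] {μ : α → ∀ i, Measure (X i)} [∀ a i, IsFiniteMeasure (μ a i)]
    (hμ : ∀ i, Measurable fun a => μ a i) : Measurable fun a => Measure.pi (μ a) := by
  have h_box (s : ∀ i, Set (X i)) (hs : ∀ i, MeasurableSet (s i)) :
      Measurable fun a => Measure.pi (μ a) (Set.univ.pi s) := by
    simp only [Measure.pi_pi]
    exact Finset.measurable_prod _ fun i _ => (Measure.measurable_coe (hs i)).comp (hμ i)
  refine Measurable.measure_of_isPiSystem generateFrom_pi.symm isPiSystem_pi ?_ ?_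
  · rintro _ ⟨s, hs, rfl⟩
    exact h_box s fun i => hs i trivial
  · simpa only [Set.pi_univ] using h_box (fun _ => Set.univ) fun _ => .univ

theorem measurable_measure_map_prodMk {κ : α → Measure β} [∀ a, IsFiniteMeasure (κ a)]
    (hκ : Measurable κ) {f : α → β → γ} (hf : Measurable (Function.uncurry f)) :
    Measurable fun a => (κ a).map (f a) := by
  have h_map (a : α) : (κ a).map (f a) =
      ((Measure.dirac a).prod (κ a)).map (Function.uncurry f) := by
    rw [Measure.dirac_prod, Measure.map_map hf measurable_prodMk_left]
    rfl
  simp_rw [h_map]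
  exact (Measure.measurable_map _ hf).comp (measurable_measure_prod Measure.measurable_dirac hκ)

theorem measurable_snoc_s6 {n : ℕ} :
    Measurable (Function.uncurry (@Fin.snoc n (fun _ => α))) := by
  refine measurable_pi_lambda _ (Fin.forall_fin_succ'.mpr ⟨fun i => ?_, ?_⟩) <;>
    simp only [Function.uncurry, Fin.snoc_castSucc, Fin.snoc_last] <;> fun_prop

theorem measurable_map_snoc {κ : α → Measure α} [∀ a, IsFiniteMeasure (κ a)] (hκ : Measurable κ)
    {n : ℕ} : Measurable fun ω : Fin (n + 1) → α =>
      (κ (ω (Fin.last n))).map fun a => (Fin.snoc ω a : Fin (n + 2) → α) :=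
  measurable_measure_map_prodMk (κ := fun ω : Fin (n + 1) → α => κ (ω (Fin.last n)))
    (hκ.comp (measurable_pi_apply _)) measurable_snoc_s6

theorem measurable_sum_finset {ι M : Type*} [Finite ι] [AddCommMonoid M] [MeasurableSpace M]
    [MeasurableAdd₂ M] {A : α → Finset ι} (hA : ∀ i, MeasurableSet {a | i ∈ A a})
    {f : α → ι → M} (hf : ∀ i, Measurable fun a => f a i) :
    Measurable fun a => ∑ i ∈ A a, f a i := by
  classical
  have := Fintype.ofFinite ι
  have h_ite (a : α) : ∑ i ∈ A a, f a i = ∑ i, if i ∈ A a then f a i else 0 := by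
    rw [← Finset.sum_filter, Finset.filter_univ_mem]
  simp_rw [h_ite]
  exact Finset.measurable_sum _ fun i _ => (hf i).ite (hA i) measurable_const

end MeasureValuedMaps

section ProductTails

variable {ι X : Type*} [Fintype ι] [MeasurableSpace X] (μ : ι → Measure X)
  [∀ i, IsProbabilityMeasure (μ i)]

theorem pi_count_ge_le {U : Set X} [DecidablePred (· ∈ U)] (hU : MeasurableSet U)
    {k : ℕ} (hk : 0 < k) :
    Measure.pi μ {s | k ≤ (Finset.univ.filter fun i => s i ∈ U).card} ≤ (∑ i, μ i U) / k := by
  have h_count (s : ι → X) : ((Finset.univ.filter fun i => s i ∈ U).card : ℝ≥0∞)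
      = ∑ i, U.indicator 1 (s i) := by
    simp [Set.indicator_apply, Finset.sum_boole]
  have h_meas (i : ι) : Measurable fun s : ι → X => U.indicator (1 : X → ℝ≥0∞) (s i) :=
    (measurable_one.indicator hU).comp (measurable_pi_apply i)
  simp_rw [← Nat.cast_le (α := ℝ≥0∞), h_count]
  refine (meas_ge_le_lintegral_div (Finset.measurable_sum _ fun i _ => h_meas i).aemeasurable
    (by exact_mod_cast hk.ne') (ENNReal.natCast_ne_top k)).trans_eq ?_
  rw [lintegral_finsetSum _ fun i _ => h_meas i]
  congr 1
  refine Finset.sum_congr rfl fun i _ => ?_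
  rw [(measurePreserving_eval μ i).lintegral_comp (measurable_one.indicator hU),
    lintegral_indicator_one hU]

theorem pi_sum_le_sub_le {f : X → ℝ} (hf : Measurable f) {a b : ℝ}
    (hfab : ∀ x, f x ∈ Set.Icc a b) {ε : ℝ} (hε : 0 < ε) :
    Measure.pi μ {s | ∑ i, f (s i) ≤ ∑ i, ∫ x, f x ∂μ i - ε} ≤
      ENNReal.ofReal (Fintype.card ι * ((b - a) / 2) ^ 2 / ε ^ 2) := by
  have h_memLp (i : ι) : MemLp f 2 (μ i) :=
    memLp_of_bounded (.of_forall hfab) hf.aestronglyMeasurable 2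
  have h_memLp_eval (i : ι) : MemLp (fun s : ι → X => f (s i)) 2 (Measure.pi μ) :=
    (h_memLp i).comp_measurePreserving (measurePreserving_eval μ i)
  have h_mean : ∫ s, ∑ i, f (s i) ∂Measure.pi μ = ∑ i, ∫ x, f x ∂μ i := by
    rw [integral_finsetSum _ fun i _ => (h_memLp_eval i).integrable one_le_two]
    exact Finset.sum_congr rfl fun i _ => integral_comp_eval hf.aestronglyMeasurable
  have h_var : variance (fun s => ∑ i, f (s i)) (Measure.pi μ) ≤
      Fintype.card ι * ((b - a) / 2) ^ 2 := by
    have h_sum := variance_sum_pi (X := fun _ => f) h_memLp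
    rw [Finset.sum_fn] at h_sum
    rw [h_sum, ← nsmul_eq_mul]
    exact Finset.sum_le_card_nsmul _ _ _ fun i _ =>
      variance_le_sq_of_bounded (.of_forall hfab) hf.aemeasurable
  calc Measure.pi μ {s | ∑ i, f (s i) ≤ ∑ i, ∫ x, f x ∂μ i - ε}
      ≤ Measure.pi μ {s | ε ≤ |∑ i, f (s i) - ∫ s, ∑ i, f (s i) ∂Measure.pi μ|} := by
        rw [h_mean]
        refine measure_mono fun s hs => ?_
        rw [Set.mem_ofPred_eq, abs_sub_comm]
        exact (le_sub_comm.mp hs).trans (le_abs_self _)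
    _ ≤ ENNReal.ofReal (variance (fun s => ∑ i, f (s i)) (Measure.pi μ) / ε ^ 2) :=
        meas_ge_le_variance_div_sq (memLp_finsetSum _ fun i _ => h_memLp_eval i) hε
    _ ≤ _ := by gcongr

end ProductTails

section FrozenProduct

variable {X : Type*} [MeasurableSpace X]

/-- The law of particle `n` when particle `0` is frozen at `z` and the others have law `ν`. -/
noncomputable def frozenMarginal {N : ℕ} (z : X) (ν : Measure X) (n : Fin N) : Measure X :=
  if (n : ℕ) = 0 then Measure.dirac z else ν

/-- The law of `N` independent particles, particle `0` being frozen at `z` and the others having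
law `ν`. -/
noncomputable def frozenProduct (N : ℕ) (z : X) (ν : Measure X) : Measure (Fin N → X) :=
  Measure.pi (frozenMarginal z ν)

variable {N : ℕ} {z : X} {ν : Measure X}

instance [IsFiniteMeasure ν] (n : Fin N) : IsFiniteMeasure (frozenMarginal z ν n) := by
  unfold frozenMarginal; split_ifs <;> infer_instance

instance [IsProbabilityMeasure ν] (n : Fin N) : IsProbabilityMeasure (frozenMarginal z ν n) := by
  unfold frozenMarginal; split_ifs <;> infer_instance

instance [IsFiniteMeasure ν] : IsFiniteMeasure (frozenProduct N z ν) := by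
  unfold frozenProduct; infer_instance

instance [IsProbabilityMeasure ν] : IsProbabilityMeasure (frozenProduct N z ν) := by
  unfold frozenProduct; infer_instance

theorem sum_frozenMarginal {M : Type*} [AddCommMonoid M] (hN : 0 < N) (Φ : Measure X → M) :
    ∑ n : Fin N, Φ (frozenMarginal z ν n) = Φ (Measure.dirac z) + (N - 1) • Φ ν := by
  obtain ⟨N, rfl⟩ := Nat.exists_eq_add_one.mpr hN
  simp [Fin.sum_univ_succ, frozenMarginal]

theorem measurable_frozenProduct {α : Type*} [MeasurableSpace α] {κ : α → Measure X}
    [∀ a, IsFiniteMeasure (κ a)] (hκ : Measurable κ) :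
    Measurable fun a => frozenProduct N z (κ a) := by
  refine measurable_measure_pi fun n => ?_
  by_cases hn : (n : ℕ) = 0 <;> simp [frozenMarginal, hn, hκ]

variable [IsProbabilityMeasure ν]

theorem ae_frozenProduct_mem (hN : 0 < N) {U : Set X} (hU : MeasurableSet U) (hz : z ∈ U) :
    ∀ᵐ s ∂frozenProduct N z ν, s ⟨0, hN⟩ ∈ U := by
  refine (measurePreserving_eval (frozenMarginal z ν) ⟨0, hN⟩).quasiMeasurePreserving.ae ?_
  rw [frozenMarginal, if_pos rfl]
  exact (ae_dirac_iff hU).mpr hz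

theorem frozenProduct_count_ge_le (hN : 0 < N) {U : Set X} [DecidablePred (· ∈ U)]
    (hU : MeasurableSet U) {K : ℝ} (hK : 0 ≤ K) (hνU : ν U ≤ ENNReal.ofReal (K / N)) {k : ℕ}
    (hk : 0 < k) :
    frozenProduct N z ν {s | k ≤ (Finset.univ.filter fun n => s n ∈ U).card} ≤
      ENNReal.ofReal ((1 + K) / k) := by
  have h_sum : ∑ n : Fin N, frozenMarginal z ν n U ≤ ENNReal.ofReal (1 + K) := by
    rw [sum_frozenMarginal hN fun ρ => ρ U, ENNReal.ofReal_add zero_le_one hK,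
      ENNReal.ofReal_one, nsmul_eq_mul]
    gcongr
    · exact prob_le_one
    · calc ((N - 1 : ℕ) : ℝ≥0∞) * ν U ≤ N * ENNReal.ofReal (K / N) := by gcongr; omega
        _ = ENNReal.ofReal K := by
          rw [← ENNReal.ofReal_natCast, ← ENNReal.ofReal_mul N.cast_nonneg]
          congr 1
          field_simp
  refine (pi_count_ge_le (frozenMarginal z ν) hU hk).trans ?_
  rw [ENNReal.ofReal_div_of_pos (by exact_mod_cast hk), ENNReal.ofReal_natCast]
  gcongr

theorem frozenProduct_sum_le_le (hN : 2 ≤ N) {f : X → ℝ} (hf : Measurable f) {b c : ℝ}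
    (hfb : ∀ x, f x ∈ Set.Icc 0 b) (hc : 0 < c) (hcf : c ≤ ∫ x, f x ∂ν) :
    frozenProduct N z ν {s | ∑ n, f (s n) ≤ N * c / 4} ≤
      ENNReal.ofReal (4 * b ^ 2 / (c ^ 2 * N)) := by
  have hN' : (2 : ℝ) ≤ N := by exact_mod_cast hN
  have h_mean : N * c / 2 ≤ ∑ n : Fin N, ∫ x, f x ∂frozenMarginal z ν n := by
    rw [sum_frozenMarginal (by omega) fun ρ => ∫ x, f x ∂ρ, nsmul_eq_mul,
      Nat.cast_sub (by omega), Nat.cast_one]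
    have h_frozen : 0 ≤ ∫ x, f x ∂Measure.dirac z := integral_nonneg fun x => (hfb x).1
    have h_free : ((N : ℝ) - 1) * c ≤ (N - 1) * ∫ x, f x ∂ν := by gcongr; linarith
    nlinarith
  calc frozenProduct N z ν {s | ∑ n, f (s n) ≤ N * c / 4}
      ≤ frozenProduct N z ν
          {s | ∑ n, f (s n) ≤ ∑ n : Fin N, ∫ x, f x ∂frozenMarginal z ν n - N * c / 4} := by
        refine measure_mono fun s hs => ?_
        rw [Set.mem_ofPred_eq] at hs ⊢
        linarith
    _ ≤ ENNReal.ofReal (Fintype.card (Fin N) * ((b - 0) / 2) ^ 2 / (N * c / 4) ^ 2) :=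
        pi_sum_le_sub_le (frozenMarginal z ν) hf hfb (by positivity)
    _ = ENNReal.ofReal (4 * b ^ 2 / (c ^ 2 * N)) := by
        rw [Fintype.card_fin]
        congr 1
        field_simp
        ring

end FrozenProduct

section Mass

variable {𝒳 ι : Type*}

/-- The total potential `ξ_A(G)` of the particles with labels in `A`. -/
def mass (G : 𝒳 → ℝ) (A : Finset ι) (y : ι → 𝒳) : ℝ :=
  ∑ j ∈ A, G (y j)

variable {G : 𝒳 → ℝ} {A : Finset ι} {y : ι → 𝒳}

theorem mass_nonneg (hG : ∀ x, 0 ≤ G x) : 0 ≤ mass G A y :=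
  Finset.sum_nonneg fun j _ => hG (y j)

theorem mass_pos (hG : ∀ x, 0 < G x) (hA : A.Nonempty) : 0 < mass G A y :=
  Finset.sum_pos (fun j _ => hG (y j)) hA

theorem nonempty_of_mass_pos (h : 0 < mass G A y) : A.Nonempty :=
  Finset.nonempty_of_sum_ne_zero h.ne'

theorem mass_le {g : ℝ} (hG : ∀ x, G x ≤ g) : mass G A y ≤ A.card * g := by
  rw [← nsmul_eq_mul]
  exact Finset.sum_le_card_nsmul A _ g fun j _ => hG (y j)

theorem sum_div_mass (h : mass G A y ≠ 0) : ∑ j ∈ A, G (y j) / mass G A y = 1 := by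
  rw [← Finset.sum_div]
  exact div_self h

end Mass

section Resampling

variable {𝒳 : Type*} [MeasurableSpace 𝒳] {ι : Type*}

/-- The law of a particle whose ancestor is drawn from the labels in `A` with probabilities
proportional to the potentials. -/
noncomputable def offspringLaw (m : Kernel 𝒳 𝒳) (G : 𝒳 → ℝ) (A : Finset ι) (y : ι → 𝒳) :
    Measure 𝒳 :=
  ∑ j ∈ A, ENNReal.ofReal (G (y j) / mass G A y) • m (y j)

variable {m : Kernel 𝒳 𝒳} {G : 𝒳 → ℝ} {A : Finset ι} {y : ι → 𝒳}

instance [IsFiniteKernel m] : IsFiniteMeasure (offspringLaw m G A y) := by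
  unfold offspringLaw; infer_instance

theorem isProbabilityMeasure_offspringLaw [IsMarkovKernel m] (hG : ∀ x, 0 < G x)
    (hA : A.Nonempty) : IsProbabilityMeasure (offspringLaw m G A y) := by
  constructor
  have h_mass : 0 < mass G A y := mass_pos hG hA
  simp only [offspringLaw, Measure.finsetSum_apply, Measure.smul_apply, measure_univ,
    smul_eq_mul, mul_one]
  rw [← ENNReal.ofReal_sum_of_nonneg fun j _ => div_nonneg (hG _).le h_mass.le,
    sum_div_mass h_mass.ne', ENNReal.ofReal_one]

theorem le_integral_offspringLaw [IsFiniteKernel m] (hG : ∀ x, 0 < G x) (hA : A.Nonempty)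
    {f : 𝒳 → ℝ} {c : ℝ} (hf : ∀ x, Integrable f (m x)) (hc : ∀ x, c ≤ ∫ x', f x' ∂m x) :
    c ≤ ∫ x', f x' ∂offspringLaw m G A y := by
  have h_mass : 0 < mass G A y := mass_pos hG hA
  have h_weight (j : ι) : 0 ≤ G (y j) / mass G A y := div_nonneg (hG _).le h_mass.le
  calc c = ∑ j ∈ A, G (y j) / mass G A y * c := by
        rw [← Finset.sum_mul, sum_div_mass h_mass.ne', one_mul]
    _ ≤ ∑ j ∈ A, G (y j) / mass G A y * ∫ x', f x' ∂m (y j) := by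
        gcongr with j
        · exact h_weight j
        · exact hc _
    _ = ∫ x', f x' ∂offspringLaw m G A y := by
        rw [offspringLaw,
          integral_finsetSum_measure fun j _ => (hf _).smul_measure ENNReal.ofReal_ne_top]
        exact Finset.sum_congr rfl fun j _ => by
          rw [integral_smul_measure, ENNReal.toReal_ofReal (h_weight j), smul_eq_mul]

variable {α : Type*} [MeasurableSpace α] [Finite ι] {B : α → Finset ι} {Y : α → ι → 𝒳}

theorem measurable_mass (hG : Measurable G) (hB : ∀ i, MeasurableSet {a | i ∈ B a})
    (hY : ∀ i, Measurable fun a => Y a i) : Measurable fun a => mass G (B a) (Y a) :=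
  measurable_sum_finset hB fun i => hG.comp (hY i)

theorem measurable_offspringLaw (hG : Measurable G) (hB : ∀ i, MeasurableSet {a | i ∈ B a})
    (hY : ∀ i, Measurable fun a => Y a i) :
    Measurable fun a => offspringLaw m G (B a) (Y a) :=
  measurable_sum_finset hB fun i =>
    measurable_measure_smul
      ((hG.comp (hY i)).div (measurable_mass hG hB hY)).ennreal_ofReal (m.measurable.comp (hY i))

end Resampling

section PairCoupling

variable {𝒳 : Type*} [MeasurableSpace 𝒳]

/-- The mixture of `μ` and `ν` with weights proportional to `|a - b|` and `1 - max a b`: the law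
of the uncoupled part of the system whose coupled fraction is the larger of `a` and `b`. -/
noncomputable def residualMixture (a b : ℝ) (μ ν : Measure 𝒳) : Measure 𝒳 :=
  ENNReal.ofReal (|a - b| / (1 - min a b)) • μ + ENNReal.ofReal ((1 - max a b) / (1 - min a b)) • ν

/-- The coupling of the mixtures `a μ + (1 - a) ν` and `b μ + (1 - b) ν'` that draws a common value
from `μ` with probability `min a b` and otherwise draws independently from the two remainders.
The flag records whether the common draw was made. -/
noncomputable def pairCoupling (a b : ℝ) (μ ν ν' : Measure 𝒳) : Measure (𝒳 × 𝒳 × Bool) :=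
  ENNReal.ofReal (min a b) • μ.map (fun y => (y, y, true)) +
    (1 - ENNReal.ofReal (min a b)) •
      (if a ≤ b then ν.prod (residualMixture a b μ ν') else (residualMixture a b μ ν).prod ν').map
        fun q => (q.1, q.2, false)

variable {a b : ℝ} {μ ν ν' : Measure 𝒳}

instance [IsFiniteMeasure μ] [IsFiniteMeasure ν] : IsFiniteMeasure (residualMixture a b μ ν) := by
  unfold residualMixture; infer_instance

instance [IsFiniteMeasure μ] [IsFiniteMeasure ν] [IsFiniteMeasure ν'] :
    IsFiniteMeasure (pairCoupling a b μ ν ν') := by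
  unfold pairCoupling
  have h_weight : 1 - ENNReal.ofReal (min a b) ≠ ∞ := ENNReal.sub_ne_top ENNReal.one_ne_top
  split_ifs <;> exact @isFiniteMeasureAdd _ _ _ _ _ (Measure.smul_finite _ h_weight)

theorem smul_map_le_pairCoupling :
    ENNReal.ofReal (min a b) • μ.map (fun y => (y, y, true)) ≤ pairCoupling a b μ ν ν' :=
  Measure.le_add_right le_rfl

theorem isProbabilityMeasure_residualMixture [IsProbabilityMeasure μ] [IsProbabilityMeasure ν]
    (ha : a < 1) (hb : b < 1) : IsProbabilityMeasure (residualMixture a b μ ν) := by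
  constructor
  have h_max : 0 < 1 - max a b := sub_pos.mpr (max_lt ha hb)
  have h_min : 0 < 1 - min a b := sub_pos.mpr (min_lt_of_left_lt ha)
  simp only [residualMixture, Measure.add_apply, Measure.smul_apply, measure_univ, smul_eq_mul,
    mul_one]
  rw [← ENNReal.ofReal_add (by positivity) (by positivity), ← max_sub_min_eq_abs', ← add_div,
    sub_add_sub_cancel', div_self h_min.ne', ENNReal.ofReal_one]

theorem isProbabilityMeasure_pairCoupling [IsProbabilityMeasure μ] [IsProbabilityMeasure ν]
    [IsProbabilityMeasure ν'] (ha : a < 1) (hb : b < 1) :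
    IsProbabilityMeasure (pairCoupling a b μ ν ν') := by
  have := isProbabilityMeasure_residualMixture (μ := μ) (ν := ν) ha hb
  have := isProbabilityMeasure_residualMixture (μ := μ) (ν := ν') ha hb
  constructor
  have h_min : ENNReal.ofReal (min a b) ≤ 1 :=
    ENNReal.ofReal_le_one.mpr (min_lt_of_left_lt ha).le
  rw [pairCoupling]
  split_ifs <;>
  simp only [Measure.add_apply, Measure.smul_apply, smul_eq_mul,
    Measure.map_apply (by fun_prop : Measurable fun y : 𝒳 => (y, y, true)) .univ,
    Measure.map_apply (by fun_prop : Measurable fun q : 𝒳 × 𝒳 => (q.1, q.2, false)) .univ,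
    Set.preimage_univ, measure_univ, mul_one, add_tsub_cancel_of_le h_min]

theorem measurable_residualMixture {α : Type*} [MeasurableSpace α] {a b : α → ℝ}
    {μ ν : α → Measure 𝒳} (ha : Measurable a) (hb : Measurable b) (hμ : Measurable μ)
    (hν : Measurable ν) : Measurable fun x => residualMixture (a x) (b x) (μ x) (ν x) := by
  unfold residualMixture
  exact (measurable_measure_smul (by fun_prop) hμ).add (measurable_measure_smul (by fun_prop) hν)

theorem measurable_pairCoupling {α : Type*} [MeasurableSpace α] {a b : α → ℝ}
    {μ ν ν' : α → Measure 𝒳} [∀ x, IsFiniteMeasure (μ x)] [∀ x, IsFiniteMeasure (ν x)]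
    [∀ x, IsFiniteMeasure (ν' x)] (ha : Measurable a) (hb : Measurable b) (hμ : Measurable μ)
    (hν : Measurable ν) (hν' : Measurable ν') :
    Measurable fun x => pairCoupling (a x) (b x) (μ x) (ν x) (ν' x) := by
  unfold pairCoupling
  refine (measurable_measure_smul (by fun_prop)
      ((Measure.measurable_map _ (by fun_prop)).comp hμ)).add
    (measurable_measure_smul (by fun_prop) ((Measure.measurable_map _ (by fun_prop)).comp ?_))
  exact Measurable.ite (measurableSet_le ha hb)
    (measurable_measure_prod hν (measurable_residualMixture ha hb hμ hν'))
    (measurable_measure_prod (measurable_residualMixture ha hb hμ hν) hν')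

end PairCoupling

section CoupledParticles

variable {𝒳 : Type*} {N : ℕ}

/-- The set `C` of labels of the coupled particles. -/
def coupledSet (s : Fin N → 𝒳 × 𝒳 × Bool) : Finset (Fin N) :=
  Finset.univ.filter fun n => (s n).2.2

/-- The potential of the common value of a coupled particle, and `0` for an uncoupled one. -/
def coupledPotential (G : 𝒳 → ℝ) (q : 𝒳 × 𝒳 × Bool) : ℝ :=
  if q.2.2 then G q.1 else 0

/-- The event that the coupled system has between `1` and `L` uncoupled particles and that its
coupled particles carry potential at least `N / (8 g)`: from such a state a particle of the next
generation stays uncoupled with probability `O(1 / N)`. Of the factor `8`, the coupling probability,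
the frozen particle and the deviation from the mean account for `2` each. -/
def WellCoupled (G : 𝒳 → ℝ) (g : ℝ) (L : ℕ) (s : Fin N → 𝒳 × 𝒳 × Bool) : Prop :=
  (coupledSet s)ᶜ.card ∈ Finset.Icc 1 L ∧ N / (8 * g) ≤ mass G (coupledSet s) fun n => (s n).1

/-- The probability `λ` (for `y = Z`) or `λ̌` (for `y = Ž`) that an ancestor is drawn from the
coupled particles, on which `Z` and `Ž` agree. -/
noncomputable def coupledFraction (G : 𝒳 → ℝ) (s : Fin N → 𝒳 × 𝒳 × Bool) (y : Fin N → 𝒳) : ℝ :=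
  mass G (coupledSet s) (fun n => (s n).1) /
    (mass G (coupledSet s) (fun n => (s n).1) + mass G (coupledSet s)ᶜ y)

theorem mem_coupledSet {s : Fin N → 𝒳 × 𝒳 × Bool} {n : Fin N} :
    n ∈ coupledSet s ↔ (s n).2.2 := by
  simp [coupledSet]

theorem compl_coupledSet (s : Fin N → 𝒳 × 𝒳 × Bool) :
    (coupledSet s)ᶜ = Finset.univ.filter fun n => ¬ (s n).2.2 := by
  rw [coupledSet, Finset.compl_filter]

theorem sum_coupledSet {M : Type*} [AddCommMonoid M] (s : Fin N → 𝒳 × 𝒳 × Bool) (f : Fin N → M) :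
    ∑ n ∈ coupledSet s, f n = ∑ n, if (s n).2.2 then f n else 0 :=
  Finset.sum_filter _ _

theorem sum_compl_coupledSet {M : Type*} [AddCommMonoid M] (s : Fin N → 𝒳 × 𝒳 × Bool)
    (f : Fin N → M) : ∑ n ∈ (coupledSet s)ᶜ, f n = ∑ n, if (s n).2.2 then 0 else f n := by
  simp only [compl_coupledSet, Finset.sum_filter, ite_not]

theorem coupledCard_eq_sub_card_compl {N t : ℕ} (ω : Fin (t + 1) → Fin N → 𝒳 × 𝒳 × Bool)
    (r : Fin (t + 1)) : coupledCard ω r = N - (coupledSet (ω r))ᶜ.card := by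
  rw [Finset.card_compl, Fintype.card_fin, Nat.sub_sub_self (card_finset_fin_le _)]
  rfl

theorem coupledPotential_mem_Icc {G : 𝒳 → ℝ} {g : ℝ} (hG : ∀ x, 0 ≤ G x) (hGg : ∀ x, G x ≤ g)
    (q : 𝒳 × 𝒳 × Bool) : coupledPotential G q ∈ Set.Icc 0 g := by
  rw [coupledPotential]
  split_ifs
  exacts [⟨hG _, hGg _⟩, ⟨le_rfl, (hG q.1).trans (hGg q.1)⟩]

theorem WellCoupled.uncoupled_nonempty {G : 𝒳 → ℝ} {g : ℝ} {L : ℕ} {s : Fin N → 𝒳 × 𝒳 × Bool}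
    (hs : WellCoupled G g L s) : (coupledSet s)ᶜ.Nonempty :=
  Finset.card_pos.mp (Finset.mem_Icc.mp hs.1).1

theorem WellCoupled.pos {G : 𝒳 → ℝ} {g : ℝ} {L : ℕ} {s : Fin N → 𝒳 × 𝒳 × Bool}
    (hs : WellCoupled G g L s) : 0 < N :=
  hs.uncoupled_nonempty.choose.pos

theorem WellCoupled.mass_coupled_pos {G : 𝒳 → ℝ} {g : ℝ} {L : ℕ} {s : Fin N → 𝒳 × 𝒳 × Bool}
    (hs : WellCoupled G g L s) (hg : 0 < g) : 0 < mass G (coupledSet s) fun n => (s n).1 :=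
  have hN : (0 : ℝ) < N := by exact_mod_cast hs.pos
  lt_of_lt_of_le (by positivity) hs.2

theorem WellCoupled.coupled_nonempty {G : 𝒳 → ℝ} {g : ℝ} {L : ℕ} {s : Fin N → 𝒳 × 𝒳 × Bool}
    (hs : WellCoupled G g L s) (hg : 0 < g) : (coupledSet s).Nonempty :=
  nonempty_of_mass_pos (hs.mass_coupled_pos hg)

theorem coupledFraction_lt_one {G : 𝒳 → ℝ} (hG : ∀ x, 0 < G x) {s : Fin N → 𝒳 × 𝒳 × Bool}
    (hs : (coupledSet s)ᶜ.Nonempty) (y : Fin N → 𝒳) : coupledFraction G s y < 1 := by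
  have h_coupled := mass_nonneg (A := coupledSet s) (y := fun n => (s n).1) fun x => (hG x).le
  have h_uncoupled := mass_pos (y := y) hG hs
  rw [coupledFraction, div_lt_one (by positivity)]
  linarith

theorem one_sub_coupledFraction_le {G : 𝒳 → ℝ} {g : ℝ} (hG : ∀ x, 0 ≤ G x) (hg : 0 < g)
    (hGg : ∀ x, G x ≤ g) {L : ℕ} {s : Fin N → 𝒳 × 𝒳 × Bool} (hs : WellCoupled G g L s)
    (y : Fin N → 𝒳) : 1 - coupledFraction G s y ≤ 8 * g ^ 2 * L / N := by
  have hN' : (0 : ℝ) < N := by exact_mod_cast hs.pos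
  set ξ := mass G (coupledSet s) fun n => (s n).1
  have h_coupled : N / (8 * g) ≤ ξ := hs.2
  have h_pos : 0 < ξ := hs.mass_coupled_pos hg
  have h_nonneg : 0 ≤ mass G (coupledSet s)ᶜ y := mass_nonneg hG
  have h_uncoupled : mass G (coupledSet s)ᶜ y ≤ L * g :=
    (mass_le hGg).trans (by gcongr; exact_mod_cast (Finset.mem_Icc.mp hs.1).2)
  calc 1 - coupledFraction G s y
      = mass G (coupledSet s)ᶜ y / (ξ + mass G (coupledSet s)ᶜ y) := by
        rw [coupledFraction, one_sub_div (by positivity), add_sub_cancel_left]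
    _ ≤ L * g / (N / (8 * g)) := by gcongr; linarith
    _ = 8 * g ^ 2 * L / N := by field_simp

variable [MeasurableSpace 𝒳]

/-- The law of a single particle of the next generation other than the frozen one. -/
noncomputable def pairLaw (m : Kernel 𝒳 𝒳) (G : 𝒳 → ℝ) (s : Fin N → 𝒳 × 𝒳 × Bool) :
    Measure (𝒳 × 𝒳 × Bool) :=
  pairCoupling (coupledFraction G s fun n => (s n).1) (coupledFraction G s fun n => (s n).2.1)
    (offspringLaw m G (coupledSet s) fun n => (s n).1)
    (offspringLaw m G (coupledSet s)ᶜ fun n => (s n).1)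
    (offspringLaw m G (coupledSet s)ᶜ fun n => (s n).2.1)

theorem coupleStep_eq_frozenProduct (m : Kernel 𝒳 𝒳) (G : 𝒳 → ℝ) (x xc : 𝒳)
    (s : Fin N → 𝒳 × 𝒳 × Bool) :
    coupleStep N m G x xc s = frozenProduct N (x, xc, false) (pairLaw m G s) := by
  simp only [coupleStep, frozenProduct, pairLaw, pairCoupling, residualMixture,
    coupledFraction, offspringLaw, mass, sum_coupledSet, sum_compl_coupledSet, ite_smul, zero_smul]
  rfl

instance {m : Kernel 𝒳 𝒳} [IsFiniteKernel m] {G : 𝒳 → ℝ} {s : Fin N → 𝒳 × 𝒳 × Bool} :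
    IsFiniteMeasure (pairLaw m G s) := by
  unfold pairLaw; infer_instance

theorem measurableSet_mem_coupledSet (n : Fin N) :
    MeasurableSet {s : Fin N → 𝒳 × 𝒳 × Bool | n ∈ coupledSet s} := by
  simp only [mem_coupledSet]
  exact (by fun_prop : Measurable fun s : Fin N → 𝒳 × 𝒳 × Bool => (s n).2.2) (.singleton true)

theorem measurableSet_mem_compl_coupledSet (n : Fin N) :
    MeasurableSet {s : Fin N → 𝒳 × 𝒳 × Bool | n ∈ (coupledSet s)ᶜ} := by
  simp only [Finset.mem_compl]
  exact (measurableSet_mem_coupledSet n).compl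

theorem measurable_coupledFraction {G : 𝒳 → ℝ} (hG : Measurable G)
    {Y : (Fin N → 𝒳 × 𝒳 × Bool) → Fin N → 𝒳} (hY : ∀ n, Measurable fun s => Y s n) :
    Measurable fun s => coupledFraction G s (Y s) := by
  have h_coupled := measurable_mass hG measurableSet_mem_coupledSet
    (Y := fun (s : Fin N → 𝒳 × 𝒳 × Bool) n => (s n).1) (by fun_prop)
  exact h_coupled.div (h_coupled.add (measurable_mass hG measurableSet_mem_compl_coupledSet hY))

theorem measurable_pairLaw {m : Kernel 𝒳 𝒳} [IsFiniteKernel m] {G : 𝒳 → ℝ} (hG : Measurable G) :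
    Measurable (pairLaw (N := N) m G) :=
  measurable_pairCoupling (measurable_coupledFraction hG (by fun_prop))
    (measurable_coupledFraction hG (by fun_prop))
    (measurable_offspringLaw hG measurableSet_mem_coupledSet (by fun_prop))
    (measurable_offspringLaw hG measurableSet_mem_compl_coupledSet (by fun_prop))
    (measurable_offspringLaw hG measurableSet_mem_compl_coupledSet (by fun_prop))

instance {m : Kernel 𝒳 𝒳} [IsFiniteKernel m] {G : 𝒳 → ℝ} {x xc : 𝒳}
    {s : Fin N → 𝒳 × 𝒳 × Bool} : IsFiniteMeasure (coupleStep N m G x xc s) := by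
  rw [coupleStep_eq_frozenProduct]; infer_instance

theorem measurable_coupleStep {m : Kernel 𝒳 𝒳} [IsFiniteKernel m] {G : 𝒳 → ℝ}
    (hG : Measurable G) (x xc : 𝒳) : Measurable (coupleStep N m G x xc) := by
  rw [show coupleStep N m G x xc = _ from funext (coupleStep_eq_frozenProduct m G x xc)]
  exact measurable_frozenProduct (measurable_pairLaw hG)

end CoupledParticles

section Domination

variable {𝒳 : Type*} [MeasurableSpace 𝒳] {μ : Measure 𝒳} {ν : Measure (𝒳 × 𝒳 × Bool)} {p : ℝ}

theorem measurableSet_uncoupled : MeasurableSet {q : 𝒳 × 𝒳 × Bool | ¬ q.2.2} :=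
  (measurable_snd.snd (.singleton true)).compl

theorem measurable_coupledPotential {G : 𝒳 → ℝ} (hG : Measurable G) :
    Measurable (coupledPotential G) :=
  (hG.comp measurable_fst).ite (measurable_snd.snd (.singleton true)) measurable_const

theorem measure_uncoupled_le [IsProbabilityMeasure μ] [IsProbabilityMeasure ν]
    (hν : ENNReal.ofReal p • μ.map (fun y => (y, y, true)) ≤ ν) :
    ν {q | ¬ q.2.2} ≤ ENNReal.ofReal (1 - p) := by
  have h_coupled : ENNReal.ofReal p ≤ ν {q | ¬ q.2.2}ᶜ := by
    refine le_of_eq_of_le ?_ (hν _)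
    rw [Measure.smul_apply, Measure.map_apply (by fun_prop) measurableSet_uncoupled.compl]
    simp
  calc ν {q | ¬ q.2.2} = 1 - ν {q | ¬ q.2.2}ᶜ := by
        rw [prob_compl_eq_one_sub measurableSet_uncoupled,
          ENNReal.sub_sub_cancel ENNReal.one_ne_top prob_le_one]
    _ ≤ 1 - ENNReal.ofReal p := by gcongr
    _ ≤ ENNReal.ofReal (1 - p) := by
        rw [tsub_le_iff_right, ← ENNReal.ofReal_one]
        simpa only [sub_add_cancel] using ENNReal.ofReal_add_le (p := 1 - p) (q := p)

theorem mul_integral_le_integral_coupledPotential [IsFiniteMeasure ν] (hp : 0 ≤ p)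
    (hν : ENNReal.ofReal p • μ.map (fun y => (y, y, true)) ≤ ν) {G : 𝒳 → ℝ} {g : ℝ}
    (hG : Measurable G) (hG₀ : ∀ x, 0 ≤ G x) (hGg : ∀ x, G x ≤ g) :
    p * ∫ x, G x ∂μ ≤ ∫ q, coupledPotential G q ∂ν := by
  have h_range := coupledPotential_mem_Icc hG₀ hGg
  have h_meas := measurable_coupledPotential hG
  calc p * ∫ x, G x ∂μ
      = ∫ q, coupledPotential G q ∂(ENNReal.ofReal p • μ.map fun y => (y, y, true)) := by
        rw [integral_smul_measure, ENNReal.toReal_ofReal hp, smul_eq_mul,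
          integral_map (by fun_prop) h_meas.aestronglyMeasurable]
        simp only [coupledPotential, if_true]
    _ ≤ ∫ q, coupledPotential G q ∂ν :=
        integral_mono_measure hν (.of_forall fun q => (h_range q).1)
          (.of_mem_Icc 0 g h_meas.aemeasurable (.of_forall h_range))

end Domination

section WellCoupledStep

variable {𝒳 : Type*} [MeasurableSpace 𝒳] {N L : ℕ} {G : 𝒳 → ℝ} {g p K : ℝ} {z : 𝒳 × 𝒳 × Bool}
  {μ : Measure 𝒳} {ν : Measure (𝒳 × 𝒳 × Bool)} [IsProbabilityMeasure ν]

theorem ae_frozenProduct_uncoupled_nonempty (hN : 0 < N) (hz : ¬ z.2.2) :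
    ∀ᵐ s ∂frozenProduct N z ν, (coupledSet s)ᶜ.Nonempty := by
  filter_upwards [ae_frozenProduct_mem hN measurableSet_uncoupled hz] with s hs
  exact ⟨⟨0, hN⟩, Finset.mem_compl.mpr fun h => hs (mem_coupledSet.mp h)⟩

theorem frozenProduct_card_uncoupled_ge_le [IsProbabilityMeasure μ]
    (hν : ENNReal.ofReal p • μ.map (fun y => (y, y, true)) ≤ ν) (hN : 0 < N) (hK : 0 ≤ K)
    (hp : 1 - p ≤ K / N) (hL : 0 < L) :
    frozenProduct N z ν {s | L ≤ (coupledSet s)ᶜ.card} ≤ ENNReal.ofReal ((1 + K) / L) := by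
  simp_rw [compl_coupledSet]
  exact frozenProduct_count_ge_le hN measurableSet_uncoupled hK
    ((measure_uncoupled_le hν).trans (ENNReal.ofReal_le_ofReal hp)) hL

theorem frozenProduct_mass_coupled_le_le
    (hν : ENNReal.ofReal p • μ.map (fun y => (y, y, true)) ≤ ν) (hN : 2 ≤ N) (hp : 1 / 2 ≤ p)
    (hG : Measurable G) (hG₀ : ∀ x, 0 ≤ G x) (hg : 0 < g) (hGg : ∀ x, G x ≤ g)
    (hμ : g⁻¹ ≤ ∫ x, G x ∂μ) :
    frozenProduct N z ν {s | mass G (coupledSet s) (fun n => (s n).1) ≤ N / (8 * g)} ≤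
      ENNReal.ofReal (16 * g ^ 4 / N) := by
  have h_mean : 1 / (2 * g) ≤ ∫ q, coupledPotential G q ∂ν :=
    calc 1 / (2 * g) = 1 / 2 * g⁻¹ := by ring
      _ ≤ p * ∫ x, G x ∂μ := by gcongr
      _ ≤ _ := mul_integral_le_integral_coupledPotential (by linarith) hν hG hG₀ hGg
  calc frozenProduct N z ν {s | mass G (coupledSet s) (fun n => (s n).1) ≤ N / (8 * g)}
      = frozenProduct N z ν {s | ∑ n, coupledPotential G (s n) ≤ N * (1 / (2 * g)) / 4} := by
        rw [show N * (1 / (2 * g)) / 4 = N / (8 * g) by ring]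
        simp_rw [mass, sum_coupledSet]
        rfl
    _ ≤ ENNReal.ofReal (4 * g ^ 2 / ((1 / (2 * g)) ^ 2 * N)) :=
        frozenProduct_sum_le_le hN (measurable_coupledPotential hG)
          (coupledPotential_mem_Icc hG₀ hGg) (by positivity) h_mean
    _ = ENNReal.ofReal (16 * g ^ 4 / N) := by
        congr 1
        field_simp
        ring

theorem le_frozenProduct_wellCoupled [IsProbabilityMeasure μ]
    (hν : ENNReal.ofReal p • μ.map (fun y => (y, y, true)) ≤ ν)
    (hG : Measurable G) (hG₀ : ∀ x, 0 ≤ G x) (hg : 0 < g) (hGg : ∀ x, G x ≤ g)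
    (hμ : g⁻¹ ≤ ∫ x, G x ∂μ) (hz : ¬ z.2.2) {δ : ℝ} (hK : 0 ≤ K) (hp : 1 - p ≤ K / N)
    (hN : 2 ≤ N) (hKN : 2 * K ≤ N) (hgN : 32 * g ^ 4 ≤ δ * N) (hL : 0 < L)
    (hKL : 2 * (1 + K) ≤ δ * L) :
    ENNReal.ofReal (1 - δ) ≤ frozenProduct N z ν {s | WellCoupled G g L s} := by
  have hN₀ : (0 : ℝ) < N := by positivity
  have hL₀ : (0 : ℝ) < L := by positivity
  have hδ : 0 ≤ δ := by by_contra! hδ; nlinarith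
  set many : Set (Fin N → 𝒳 × 𝒳 × Bool) := {s | L ≤ (coupledSet s)ᶜ.card}
  set light : Set (Fin N → 𝒳 × 𝒳 × Bool) :=
    {s | mass G (coupledSet s) (fun n => (s n).1) ≤ N / (8 * g)}
  have h_many : frozenProduct N z ν many ≤ ENNReal.ofReal (δ / 2) := by
    refine (frozenProduct_card_uncoupled_ge_le hν (by omega) hK hp hL).trans
      (ENNReal.ofReal_le_ofReal ?_)
    rw [div_le_div_iff₀ hL₀ two_pos]
    linarith
  have h_light : frozenProduct N z ν light ≤ ENNReal.ofReal (δ / 2) := by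
    have hp_half : K / N ≤ 1 / 2 := by rw [div_le_div_iff₀ hN₀ two_pos]; linarith
    refine (frozenProduct_mass_coupled_le_le hν hN (by linarith) hG hG₀ hg hGg hμ).trans
      (ENNReal.ofReal_le_ofReal ?_)
    rw [div_le_div_iff₀ hN₀ two_pos]
    linarith
  have h_cover : ∀ᵐ s ∂frozenProduct N z ν, s ∈ {s | WellCoupled G g L s} ∪ (many ∪ light) := by
    filter_upwards [ae_frozenProduct_uncoupled_nonempty (by omega) hz] with s hs
    by_cases h : s ∈ many ∪ light
    · exact .inr h
    · rw [Set.mem_union, not_or] at h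
      exact .inl ⟨Finset.mem_Icc.mpr ⟨hs.card_pos, (not_le.mp h.1).le⟩, (not_le.mp h.2).le⟩
  calc ENNReal.ofReal (1 - δ) = 1 - ENNReal.ofReal δ := by
        rw [ENNReal.ofReal_sub _ hδ, ENNReal.ofReal_one]
    _ ≤ frozenProduct N z ν {s | WellCoupled G g L s} := by
        rw [tsub_le_iff_right, ← measure_univ (μ := frozenProduct N z ν)]
        refine (measure_mono_ae (h_cover.mono fun s hs _ => hs)).trans
          ((measure_union_le _ _).trans ?_)
        gcongr
        refine (measure_union_le _ _).trans ((add_le_add h_many h_light).trans_eq ?_)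
        rw [← ENNReal.ofReal_add (by positivity) (by positivity), add_halves]

end WellCoupledStep

section Steps

variable {𝒳 : Type*} [MeasurableSpace 𝒳] {G : 𝒳 → ℝ} {g : ℝ}

theorem exists_eventually_le_frozenProduct_wellCoupled (hG : Measurable G) (hG₀ : ∀ x, 0 ≤ G x)
    (hg : 0 < g) (hGg : ∀ x, G x ≤ g) {K δ : ℝ} (hK : 0 ≤ K) (hδ : 0 < δ) :
    ∃ L : ℕ, ∀ᶠ N : ℕ in atTop, ∀ (μ : Measure 𝒳) (ν : Measure (𝒳 × 𝒳 × Bool))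
      [IsProbabilityMeasure μ] [IsProbabilityMeasure ν] (z : 𝒳 × 𝒳 × Bool) (p : ℝ),
      g⁻¹ ≤ ∫ x, G x ∂μ → ENNReal.ofReal p • μ.map (fun y => (y, y, true)) ≤ ν → 1 - p ≤ K / N →
        ¬ z.2.2 → ENNReal.ofReal (1 - δ) ≤ frozenProduct N z ν {s | WellCoupled G g L s} := by
  obtain ⟨L, hL⟩ := exists_nat_ge (2 * (1 + K) / δ)
  have hL₀ : (0 : ℝ) < L := lt_of_lt_of_le (by positivity) hL
  refine ⟨L, ?_⟩
  have h_cast := tendsto_natCast_atTop_atTop (R := ℝ)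
  filter_upwards [eventually_ge_atTop 2, h_cast.eventually_ge_atTop (2 * K),
    h_cast.eventually_ge_atTop (32 * g ^ 4 / δ)] with N hN hKN hgN μ ν _ _ z p hμ hν hp hz
  exact le_frozenProduct_wellCoupled hν hG hG₀ hg hGg hμ hz hK hp hN hKN
    ((div_le_iff₀' hδ).mp hgN) (by exact_mod_cast hL₀) ((div_le_iff₀' hδ).mp hL)

theorem isProbabilityMeasure_pairLaw {N : ℕ} {m : Kernel 𝒳 𝒳} [IsMarkovKernel m]
    (hG : ∀ x, 0 < G x) {s : Fin N → 𝒳 × 𝒳 × Bool} (hs : (coupledSet s).Nonempty)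
    (hs' : (coupledSet s)ᶜ.Nonempty) : IsProbabilityMeasure (pairLaw m G s) := by
  have := isProbabilityMeasure_offspringLaw (m := m) (y := fun n => (s n).1) hG hs
  have := isProbabilityMeasure_offspringLaw (m := m) (y := fun n => (s n).1) hG hs'
  have := isProbabilityMeasure_offspringLaw (m := m) (y := fun n => (s n).2.1) hG hs'
  exact isProbabilityMeasure_pairCoupling (coupledFraction_lt_one hG hs' _)
    (coupledFraction_lt_one hG hs' _)

theorem exists_eventually_le_coupleStep_wellCoupled {m : Kernel 𝒳 𝒳} [IsMarkovKernel m]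
    {G₀ : 𝒳 → ℝ} {g₀ : ℝ} (hG₀ : ∀ x, 0 < G₀ x) (hg₀ : 0 < g₀) (hGg₀ : ∀ x, G₀ x ≤ g₀)
    (hG : Measurable G) (hG_nonneg : ∀ x, 0 ≤ G x) (hg : 0 < g) (hGg : ∀ x, G x ≤ g)
    (hmG : ∀ x, g⁻¹ ≤ ∫ x', G x' ∂m x) {δ : ℝ} (hδ : 0 < δ) (L₀ : ℕ) :
    ∃ L : ℕ, ∀ᶠ N : ℕ in atTop, ∀ (x xc : 𝒳) (s : Fin N → 𝒳 × 𝒳 × Bool),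
      WellCoupled G₀ g₀ L₀ s →
        ENNReal.ofReal (1 - δ) ≤ coupleStep N m G₀ x xc s {s' | WellCoupled G g L s'} := by
  obtain ⟨L, hL⟩ := exists_eventually_le_frozenProduct_wellCoupled hG hG_nonneg hg hGg
    (K := 8 * g₀ ^ 2 * L₀) (by positivity) hδ
  refine ⟨L, ?_⟩
  filter_upwards [hL] with N hN x xc s hs
  have h_coupled := hs.coupled_nonempty hg₀
  have := isProbabilityMeasure_offspringLaw (m := m) (y := fun n => (s n).1) hG₀ h_coupled
  have := isProbabilityMeasure_pairLaw (m := m) hG₀ h_coupled hs.uncoupled_nonempty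
  have h_integrable (x : 𝒳) : Integrable G (m x) :=
    .of_mem_Icc 0 g hG.aemeasurable (.of_forall fun x' => ⟨hG_nonneg x', hGg x'⟩)
  rw [coupleStep_eq_frozenProduct]
  refine hN _ _ _ _ (le_integral_offspringLaw hG₀ h_coupled h_integrable hmG)
    smul_map_le_pairCoupling ?_ Bool.false_ne_true
  rw [sub_le_comm, le_min_iff]
  exact ⟨sub_le_comm.mp (one_sub_coupledFraction_le (fun x => (hG₀ x).le) hg₀ hGg₀ hs _),
    sub_le_comm.mp (one_sub_coupledFraction_le (fun x => (hG₀ x).le) hg₀ hGg₀ hs _)⟩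

end Steps

section CoupledLaw

variable {𝒳 : Type*} [MeasurableSpace 𝒳] {m0 : Measure 𝒳} {m : ℕ → Kernel 𝒳 𝒳}
  {G : ℕ → 𝒳 → ℝ} {g : ℕ → ℝ}

theorem exists_eventually_le_coupledLaw_zero_wellCoupled [IsProbabilityMeasure m0]
    (hG : Measurable (G 0)) (hG₀ : ∀ x, 0 ≤ G 0 x) (hg : 0 < g 0)
    (hGg : ∀ x, G 0 x ≤ g 0) (hm0 : (g 0)⁻¹ ≤ ∫ x, G 0 x ∂m0) {δ : ℝ} (hδ : 0 < δ) :
    ∃ L : ℕ, ∀ᶠ N : ℕ in atTop, ∀ x xc : ℕ → 𝒳, ENNReal.ofReal (1 - δ) ≤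
      coupledLaw N m0 m G x xc 0 {ω | WellCoupled (G 0) (g 0) L (ω 0)} := by
  obtain ⟨L, hL⟩ := exists_eventually_le_frozenProduct_wellCoupled hG hG₀ hg hGg le_rfl hδ
  refine ⟨L, hL.mono fun N hN x xc => ?_⟩
  have h_prob : IsProbabilityMeasure (m0.map fun y => (y, y, true)) :=
    Measure.isProbabilityMeasure_map (by fun_prop)
  have h_first := hN m0 (m0.map fun y => (y, y, true)) (x 0, xc 0, false) 1 hm0
    (by rw [ENNReal.ofReal_one, one_smul]) (by simp) Bool.false_ne_true
  exact h_first.trans (Measure.le_map_apply (by fun_prop) _)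

theorem mul_coupledLaw_le_coupledLaw_succ {N t : ℕ} [IsFiniteKernel (m (t + 1))]
    (hG : Measurable (G t)) {x xc : ℕ → 𝒳}
    {A : Set (Fin (t + 1) → Fin N → 𝒳 × 𝒳 × Bool)} {B : Set (Fin N → 𝒳 × 𝒳 × Bool)} {c : ℝ≥0∞}
    (hc : ∀ ω ∈ A,
      c ≤ coupleStep N (m (t + 1)) (G t) (x (t + 1)) (xc (t + 1)) (ω (Fin.last t)) B) :
    c * coupledLaw N m0 m G x xc t A ≤
      coupledLaw N m0 m G x xc (t + 1) {ω | (fun r => ω r.castSucc) ∈ A ∧ ω (Fin.last _) ∈ B} := by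
  refine mul_measure_le_bind
    (measurable_map_snoc (measurable_coupleStep hG _ _)).aemeasurable fun ω hω =>
      (hc ω hω).trans ((measure_mono fun s hs => ?_).trans
        (Measure.le_map_apply measurable_snoc_s6.of_uncurry_left.aemeasurable _))
  simpa [hω] using hs

variable [IsProbabilityMeasure m0] [∀ t, IsMarkovKernel (m t)]

theorem exists_eventually_le_coupledLaw_wellCoupled (hG : ∀ t, Measurable (G t))
    (hG₀ : ∀ t x, 0 < G t x) (hg : ∀ t, 0 < g t) (hGg : ∀ t x, G t x ≤ g t)
    (hm0 : (g 0)⁻¹ ≤ ∫ x, G 0 x ∂m0)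
    (hm : ∀ t, 0 < t → ∀ x, (g t)⁻¹ ≤ ∫ x', G t x' ∂m t x) (t : ℕ) {δ : ℝ} (hδ : 0 < δ) :
    ∃ L : Fin (t + 1) → ℕ, ∀ᶠ N : ℕ in atTop, ∀ x xc : ℕ → 𝒳,
      ENNReal.ofReal (1 - δ) ≤
        coupledLaw N m0 m G x xc t
          {ω | ∀ r : Fin (t + 1), WellCoupled (G r) (g r) (L r) (ω r)} := by
  induction t generalizing δ with
  | zero =>
    obtain ⟨L, hL⟩ := exists_eventually_le_coupledLaw_zero_wellCoupled (m := m) (hG 0)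
      (fun x => (hG₀ 0 x).le) (hg 0) (hGg 0) hm0 hδ
    exact ⟨fun _ => L, by simpa [Fin.forall_fin_one] using hL⟩
  | succ t ih =>
    obtain ⟨L, hL⟩ := ih (half_pos hδ)
    obtain ⟨L', hL'⟩ := exists_eventually_le_coupleStep_wellCoupled (m := m (t + 1)) (hG₀ t) (hg t)
      (hGg t) (hG _) (fun x => (hG₀ _ x).le) (hg _) (hGg _) (hm _ t.succ_pos) (half_pos hδ)
      (L (Fin.last t))
    refine ⟨Fin.snoc L L', ?_⟩
    filter_upwards [hL, hL'] with N hN hN' x xc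
    calc ENNReal.ofReal (1 - δ)
        ≤ ENNReal.ofReal (1 - δ / 2) * ENNReal.ofReal (1 - δ / 2) := ofReal_one_sub_le_mul_self δ
      _ ≤ ENNReal.ofReal (1 - δ / 2) *
            coupledLaw N m0 m G x xc t
              {ω | ∀ r : Fin (t + 1), WellCoupled (G r) (g r) (L r) (ω r)} := by
          gcongr
          exact hN x xc
      _ ≤ _ :=
          mul_coupledLaw_le_coupledLaw_succ (hG t) fun ω hω => hN' _ _ _ (hω (Fin.last t))
      _ ≤ _ := by
          refine measure_mono fun ω hω => Fin.forall_fin_succ'.mpr ?_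
          simpa using hω

theorem coupling_set_cardinality_bound_general (hG : ∀ t, Measurable (G t))
    (hG₀ : ∀ t x, 0 < G t x) (hGg : ∀ t x, G t x ≤ g t) (hm0 : (g 0)⁻¹ ≤ ∫ x, G 0 x ∂m0)
    (hm : ∀ t, 0 < t → ∀ x, (g t)⁻¹ ≤ ∫ x', G t x' ∂m t x) (T : ℕ) {p : ℝ} (hp : p < 1) :
    ∃ (N0 : ℕ) (L : Fin T → ℕ), 1 ≤ N0 ∧ (∀ i, 1 ≤ L i) ∧
      ∀ N, N0 ≤ N → ∀ x xc : Fin (T + 1) → 𝒳,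
        ENNReal.ofReal p ≤ ∑ k ∈ Fintype.piFinset fun i : Fin T => Finset.Icc 1 (L i),
          coupledLaw N m0 m G (extendPath x) (extendPath xc) T
            {ω | ∀ i : Fin T, coupledCard ω i.succ = N - k i} := by
  obtain ⟨x₀⟩ := m0.nonempty_of_neZero
  have hg (t : ℕ) : 0 < g t := (hG₀ t x₀).trans_le (hGg t x₀)
  obtain ⟨L, hL⟩ :=
    exists_eventually_le_coupledLaw_wellCoupled hG hG₀ hg hGg hm0 hm T (sub_pos.mpr hp)
  obtain ⟨N0, hN0⟩ := eventually_atTop.mp hL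
  refine ⟨max 1 N0, fun i => max 1 (L i.succ), le_max_left .., fun i => le_max_left .., ?_⟩
  intro N hN x xc
  calc ENNReal.ofReal p
      ≤ coupledLaw N m0 m G (extendPath x) (extendPath xc) T
          {ω | ∀ r : Fin (T + 1), WellCoupled (G r) (g r) (L r) (ω r)} := by
        simpa only [sub_sub_cancel] using
          hN0 N (le_of_max_le_right hN) (extendPath x) (extendPath xc)
    _ ≤ coupledLaw N m0 m G (extendPath x) (extendPath xc) T
          (⋃ k ∈ Fintype.piFinset fun i : Fin T => Finset.Icc 1 (max 1 (L i.succ)),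
            {ω | ∀ i : Fin T, coupledCard ω i.succ = N - k i}) := by
        refine measure_mono fun ω hω => Set.mem_iUnion₂.mpr
          ⟨fun i => (coupledSet (ω i.succ))ᶜ.card, Fintype.mem_piFinset.mpr fun i => ?_,
            fun i => coupledCard_eq_sub_card_compl ω i.succ⟩
        exact Finset.Icc_subset_Icc_right (le_max_right ..) (hω i.succ).1
    _ ≤ _ := measure_biUnion_finset_le _ _

end CoupledLaw

end ParticleGibbs

namespace ParticleGibbs

variable {𝒳 : Type*} [MetricSpace 𝒳] [CompleteSpace 𝒳] [TopologicalSpace.SeparableSpace 𝒳]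
  [MeasurableSpace 𝒳] [BorelSpace 𝒳]

/-- Under Assumptions (G) and (MR), for any `δ ∈ (0,1)` and `T ≥ 1` there exist
`N₀, L_1, …, L_T` such that for all `N ≥ N₀` and all frozen trajectories, the coupled
conditional particle systems satisfy
`∑_{k_1=1}^{L_1} ⋯ ∑_{k_T=1}^{L_T} ℙ(|C_1| = N-k_1, …, |C_T| = N-k_T) ≥ (1-δ)^{3T}`. -/
theorem coupling_set_cardinality_bound
    (T : ℕ) (hT : 1 ≤ T)
    (m0 : Measure 𝒳) (hm0 : IsProbabilityMeasure m0)
    (m : ℕ → Kernel 𝒳 𝒳) (hm : ∀ t, IsMarkovKernel (m t))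
    (G : ℕ → 𝒳 → ℝ) (hGmeas : ∀ t, Measurable (G t))
    (hGpos : ∀ t x, 0 < G t x)
    (g : ℕ → ℝ) (hg : ∀ t, 0 < g t) (hGle : ∀ t x, G t x ≤ g t)
    (hg0 : (g 0)⁻¹ ≤ ∫ x, G 0 x ∂m0)
    (hgt : ∀ t, 0 < t → ∀ x', (g t)⁻¹ ≤ ∫ x, G t x ∂((m t) x'))
    (δ : ℝ) (hδ : δ ∈ Set.Ioo (0 : ℝ) 1) :
    ∃ (N0 : ℕ) (L : Fin T → ℕ), 1 ≤ N0 ∧ (∀ i, 1 ≤ L i) ∧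
      ∀ N, N0 ≤ N → ∀ (x xc : Fin (T + 1) → 𝒳),
        ENNReal.ofReal ((1 - δ) ^ (3 * T)) ≤
          ∑ k ∈ Fintype.piFinset (fun i : Fin T => Finset.Icc 1 (L i)),
            coupledLaw N m0 m G (extendPath x) (extendPath xc) T
              {ω | ∀ i : Fin T, coupledCard ω i.succ = N - k i} := by
  obtain ⟨hδ₀, hδ₁⟩ := hδ
  exact coupling_set_cardinality_bound_general hGmeas hGpos hGle hg0 hgt T
    (pow_lt_one₀ (by linarith) (by linarith) (by omega))

end ParticleGibbs
end
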